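/- arXiv:1310.8511 — 2 statements merged into one kernel-verified Lean document; each statement's English description precedes it below -/
import Mathlib

section
/- The plain switch distribution is weakly universal: for every stationary probability measure Q on Ω = {1,...,D}^ℤ, lim_{n→∞} (1/n)·E_Q[−log P(X_1^n)] = h_Q. -/
open Filter MeasureTheory
open scoped Topology

/-- Number of occurrences `c(w|z)` of `w` as a substring of `z`. -/
def cnt {D : ℕ} (w z : List (Fin D)) : ℕ :=
  ((List.range (z.length - w.length + 1)).filter
    (fun i => (z.drop i).take w.length = w)).length

/-- Count `c(w | z_1^{m-1})` of `w` in the string `z` with its last symbol removed,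
with the convention that counting in a block of length `-1` (i.e. when `z` itself is
empty) gives `0`. -/
def cntPred {D : ℕ} (w z : List (Fin D)) : ℕ :=
  if z = [] then 0 else cnt w z.dropLast

/-- The prefix `x_1^n` of the one-sided sequence `x` (0-indexed: `x i = x_{i+1}`). -/
def pref {D : ℕ} (x : ℕ → Fin D) (n : ℕ) : List (Fin D) :=
  (List.range n).map x

/-- Adaptive Markov predictor: the natural-number index corresponds to the Markov
order shifted by one, so `Bpred D xs a (k+1) = B(a | xs, k)` and
`Bpred D xs a 0 = B(a | xs, -1) = 1/D`, where
`B(x_{n+1}|x_1^n, k) = (c(x_{n+1-k}^{n+1}|x_1^n) + B(x_{n+1}|x_1^n, k-1)) /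
(c(x_{n+1-k}^{n}|x_1^{n-1}) + 1)`.  Counts of substrings whose indices fall outside
the string are taken to be zero. -/
noncomputable def Bpred (D : ℕ) (xs : List (Fin D)) (a : Fin D) : ℕ → ℝ
  | 0 => 1 / D
  | k + 1 =>
    if k ≤ xs.length then
      ((cnt (xs.drop (xs.length - k) ++ [a]) xs : ℝ) + Bpred D xs a k) /
      ((cntPred (xs.drop (xs.length - k)) xs : ℝ) + 1)
    else Bpred D xs a k

/-- Partial switch distribution `P(x_1^n, k)` with Markov order `k : ℤ`:
`P(x_1,-1) = p_0 B(x_1|-1)`, `P(x_1,0) = (1-p_0) B(x_1|0)`, `P(x_1^n,k) = 0`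
for `k < -1` or `k ≥ n`, and
`P(x_1^{n+1},k) = [p_n P(x_1^n,k) + (1-p_n) P(x_1^n,k-1)] B(x_{n+1}|x_1^n,k)`. -/
noncomputable def Ppart (D : ℕ) (p : ℕ → ℝ) (x : ℕ → Fin D) : ℕ → ℤ → ℝ
  | 0, _ => 0
  | 1, k =>
    if k = -1 then p 0 * Bpred D [] (x 0) 0
    else if k = 0 then (1 - p 0) * Bpred D [] (x 0) 1
    else 0
  | n + 2, k =>
    if -1 ≤ k ∧ k ≤ (n : ℤ) + 1 then
      (p (n + 1) * Ppart D p x (n + 1) k +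
        (1 - p (n + 1)) * Ppart D p x (n + 1) (k - 1)) *
        Bpred D (pref x (n + 1)) (x (n + 1)) (k + 1).toNat
    else 0

/-- The plain switch distribution `P(x_1^n) = Σ_{k=-1}^{n-1} P(x_1^n, k)`. -/
noncomputable def swP (D : ℕ) (p : ℕ → ℝ) (x : ℕ → Fin D) (n : ℕ) : ℝ :=
  ∑ kk ∈ Finset.range (n + 1), Ppart D p x n ((kk : ℤ) - 1)

/-- The two-sided sequence space `Ω = {1,...,D}^ℤ` with the product σ-algebra. -/
abbrev Omega (D : ℕ) := ℤ → Fin D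

/-- The shift `T : Ω → Ω`. -/
def shiftT (D : ℕ) : Omega D → Omega D := fun ω i => ω (i + 1)

/-- The cylinder set `{X_1 = x 0, ..., X_n = x (n-1)}`. -/
def cylSet (D : ℕ) (x : ℕ → Fin D) (n : ℕ) : Set (Omega D) :=
  {ω | ∀ i < n, ω ((i : ℤ) + 1) = x i}

/-- The one-sided sample path `X_1, X_2, ...` of `ω` (0-indexed). -/
def path (D : ℕ) (ω : Omega D) : ℕ → Fin D := fun i => ω ((i : ℤ) + 1)

/-- The cylinder probability `Q(x_1^n)`. -/
noncomputable def Qstr (D : ℕ) (Q : Measure (Omega D)) (x : ℕ → Fin D) (n : ℕ) : ℝ :=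
  (Q (cylSet D x n)).toReal


section switchproof
open Finset

/-- occurrences of `v` among the first `i` terms -/
def occ {S : Type*} [DecidableEq S] (s : ℕ → S) (i : ℕ) (v : S) : ℕ :=
  #{j ∈ range i | s j = v}

theorem occ_succ {S : Type*} [DecidableEq S] (s : ℕ → S) (i : ℕ) (v : S) :
    occ s (i+1) v = occ s i v + if s i = v then 1 else 0 := by
  unfold occ
  rw [range_add_one, filter_insert]
  split_ifs with h
  · rw [card_insert_of_notMem (by simp)]
  · simp

theorem occ_le {S : Type*} [DecidableEq S] (s : ℕ → S) (i : ℕ) (v : S) : occ s i v ≤ i := by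
  unfold occ
  exact (card_filter_le _ _).trans (by simp)

theorem prod_occ {S : Type*} [DecidableEq S] [Fintype S] (s : ℕ → S) (g : S → ℕ → ℝ) (n : ℕ) :
    ∏ i ∈ range n, g (s i) (occ s i (s i)) = ∏ v, ∏ j ∈ range (occ s n v), g v j := by
  induction n with
  | zero => simp [occ]
  | succ n ih =>
    rw [prod_range_succ, ih]
    have h : ∀ v, ∏ j ∈ range (occ s (n+1) v), g v j =
        (∏ j ∈ range (occ s n v), g v j) * (if v = s n then g (s n) (occ s n (s n)) else 1) := by
      intro v
      rw [occ_succ]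
      by_cases h : s n = v
      · subst h; simp [prod_range_succ]
      · simp [h, Ne.symm h]
    simp_rw [h]
    rw [prod_mul_distrib]
    simp

theorem occ_sum {W A : Type*} [DecidableEq W] [DecidableEq A] [Fintype A]
    (u : ℕ → W) (a : ℕ → A) (n : ℕ) (w : W) :
    ∑ b, occ (fun i => (u i, a i)) n (w, b) = occ u n w := by
  unfold occ
  rw [card_eq_sum_card_fiberwise (f := a) (t := univ) (by simp)]
  refine sum_congr rfl fun b _ => ?_
  rw [filter_filter]
  simp

theorem multi_le {A : Type*} [DecidableEq A] [Fintype A] (θ : A → ℝ) (h0 : ∀ a, 0 ≤ θ a)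
    (h1 : ∑ a, θ a ≤ 1) (N : A → ℕ) :
    (∏ a, θ a ^ N a) ≤ (∏ a, ((N a).factorial : ℝ)) / ((∑ a, N a).factorial : ℝ) := by
  have h := Finset.sum_pow_eq_sum_piAntidiag (univ : Finset A) θ (∑ a, N a)
  have h2 : (Nat.multinomial univ N : ℝ) * ∏ a, θ a ^ N a ≤ 1 := by
    refine le_trans ?_ (pow_le_one₀ (n := ∑ a, N a) (sum_nonneg fun a _ => h0 a) h1)
    rw [h]
    refine single_le_sum (f := fun N : A → ℕ => (Nat.multinomial univ N : ℝ) * ∏ a, θ a ^ N a)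
      (fun i _ => ?_) ?_
    · exact mul_nonneg (by positivity) (prod_nonneg fun a _ => pow_nonneg (h0 a) _)
    · simp
  have h3 := Nat.multinomial_spec univ N
  rw [le_div_iff₀ (by positivity), ← h3]
  push_cast
  calc _ = (∏ a, ((N a).factorial : ℝ)) * ((Nat.multinomial univ N : ℝ) * ∏ a, θ a ^ N a) := by ring
    _ ≤ (∏ a, ((N a).factorial : ℝ)) * 1 := by gcongr
    _ = _ := by ring

theorem slack_aux (δ : ℝ) (h0 : 0 < δ) (N : ℕ) :
    δ / (N + 1) ≤ ∏ j ∈ range (N+1), (((j:ℝ) + δ) / (j + 1)) := by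
  induction N with
  | zero => simp
  | succ N ih =>
    rw [prod_range_succ]
    refine le_trans ?_ (mul_le_mul_of_nonneg_right ih (by positivity))
    push_cast
    rw [div_mul_div_comm, div_le_div_iff₀ (by positivity) (by positivity)]
    nlinarith [mul_pos h0 h0, mul_pos (mul_pos h0 h0) (by positivity : (0:ℝ) < N + 1 + 1)]

theorem slack {S : Type*} [DecidableEq S] [Fintype S] (s : ℕ → S) (δ : ℝ) (h0 : 0 < δ) (h1 : δ ≤ 1)
    (n : ℕ) : (δ / (n+1)) ^ (Fintype.card S) ≤
      ∏ i ∈ range n, (((occ s i (s i) : ℝ) + δ) / ((occ s i (s i) : ℝ) + 1)) := by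
  rw [prod_occ s (fun _ j => ((j:ℝ) + δ) / ((j : ℝ) + 1))]
  rw [← card_univ, ← prod_const]
  refine prod_le_prod (fun _ _ => by positivity) fun v _ => ?_
  have := occ_le s n v
  rcases hN : occ s n v with _ | N
  · simp
    rw [div_le_one (by positivity)]
    have : (0:ℝ) ≤ n := by positivity
    linarith
  · refine le_trans ?_ (slack_aux δ h0 N)
    have : (N:ℝ) ≤ n := by exact_mod_cast (by omega)
    gcongr

theorem theta_le {W A : Type*} [DecidableEq W] [DecidableEq A] [Fintype W] [Fintype A]
    (θ : W → A → ℝ) (h0 : ∀ w a, 0 ≤ θ w a) (h1 : ∀ w, ∑ a, θ w a ≤ 1)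
    (u : ℕ → W) (a : ℕ → A) (n : ℕ) :
    ∏ i ∈ range n, θ (u i) (a i) ≤
      ∏ i ∈ range n, (((occ (fun i => (u i, a i)) i (u i, a i) : ℝ) + 1) /
        ((occ u i (u i) : ℝ) + 1)) := by
  rw [prod_div_distrib]
  rw [prod_occ u (fun _ j => (j : ℝ) + 1)]
  have e1 := prod_occ (fun i => (u i, a i)) (fun _ j => (j : ℝ) + 1) n
  have e2 := prod_occ (fun i => (u i, a i)) (fun s _ => θ s.1 s.2) n
  simp only at e1 e2
  rw [e1, e2, Fintype.prod_prod_type, Fintype.prod_prod_type, ← prod_div_distrib]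
  refine prod_le_prod (fun w _ => prod_nonneg fun b _ => prod_nonneg fun _ _ => h0 _ _) fun w _ => ?_
  have hf : ∀ N : ℕ, ∏ j ∈ range N, ((j:ℝ) + 1) = (N.factorial : ℝ) := by
    intro N
    rw [← prod_range_add_one_eq_factorial]; push_cast; rfl
  simp_rw [hf]
  simp only [prod_const, card_range]
  rw [← occ_sum u a n w]
  exact multi_le (θ w) (h0 w) (h1 w) _

theorem regret {W A : Type*} [DecidableEq W] [DecidableEq A] [Fintype W] [Fintype A]
    (θ : W → A → ℝ) (h0 : ∀ w a, 0 ≤ θ w a) (h1 : ∀ w, ∑ a, θ w a ≤ 1)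
    (u : ℕ → W) (a : ℕ → A) (n : ℕ) (δ : ℝ) (hδ : 0 < δ) (hδ1 : δ ≤ 1) :
    (δ / (n+1)) ^ (Fintype.card (W × A)) * ∏ i ∈ range n, θ (u i) (a i) ≤
      ∏ i ∈ range n, (((occ (fun i => (u i, a i)) i (u i, a i) : ℝ) + δ) /
        ((occ u i (u i) : ℝ) + 1)) := by
  refine (mul_le_mul (slack (fun i => (u i, a i)) δ hδ hδ1 n) (theta_le θ h0 h1 u a n)
    (prod_nonneg fun _ _ => h0 _ _) (prod_nonneg fun _ _ => by positivity)).trans ?_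
  rw [← prod_mul_distrib]
  refine prod_le_prod (fun _ _ => by positivity) fun i _ => ?_

  rw [div_mul_div_comm, mul_comm ((occ (fun i => (u i, a i)) i (u i, a i) : ℝ) + 1),
    mul_div_mul_right _ _ (by positivity)]

/-! counts -/
theorem cnt_append {D : ℕ} (w z : List (Fin D)) (a : Fin D) (h : w.length ≤ z.length) :
    cnt (w ++ [a]) z = #{j ∈ range (z.length - w.length) |
      (z.drop j).take w.length = w ∧ z[j + w.length]? = some a} := by
  rcases Nat.lt_or_ge w.length z.length with h' | h'
  · have e : z.length - (w ++ [a]).length + 1 = z.length - w.length := by simp; omega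
    unfold cnt
    rw [e, ← List.toFinset_card_of_nodup (List.nodup_range.filter _)]
    congr 1
    ext j
    simp only [List.mem_toFinset, List.mem_filter, List.mem_range, decide_eq_true_eq, mem_filter,
      mem_range, List.length_append, List.length_singleton]
    refine and_congr_right fun hj => ?_
    have hl : j + w.length < z.length := by omega
    rw [List.take_add_one]
    rw [List.getElem?_drop, List.getElem?_eq_getElem hl]
    simp only [Option.toList_some, Option.some.injEq]
    constructor
    · intro hh
      have := List.append_inj' hh rfl
      simpa using this
    · rintro ⟨h1, h2⟩; rw [h1, h2]
  · have : w.length = z.length := by omega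
    simp [cnt, this]
    intro hh
    have := congrArg List.length hh
    simp at this
    omega

theorem cntPred_eq {D : ℕ} (w z : List (Fin D)) (h : w.length ≤ z.length) :
    cntPred w z = #{j ∈ range (z.length - w.length) | (z.drop j).take w.length = w} := by
  unfold cntPred
  split_ifs with hz
  · subst hz; simp
  have hz' : 0 < z.length := List.length_pos_of_ne_nil hz
  rcases Nat.lt_or_ge w.length z.length with h' | h'
  · have e : z.dropLast.length - w.length + 1 = z.length - w.length := by simp; omega
    unfold cnt
    rw [e, ← List.toFinset_card_of_nodup (List.nodup_range.filter _)]
    congr 1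
    ext j
    simp only [List.mem_toFinset, List.mem_filter, List.mem_range, decide_eq_true_eq, mem_filter,
      mem_range]
    refine and_congr_right fun hj => ?_
    have : (z.dropLast.drop j).take w.length = (z.drop j).take w.length := by
      rw [List.dropLast_eq_take, List.drop_take, List.take_take]
      congr 1; omega
    rw [this]
  · have : w.length = z.length := by omega
    simp only [cnt, this, List.length_dropLast]
    simp
    intro hh
    have := congrArg List.length hh
    simp at this
    omega

theorem cnt_sum {D : ℕ} (w z : List (Fin D)) (h : w.length ≤ z.length) :
    ∑ a, cnt (w ++ [a]) z = cntPred w z := by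
  simp_rw [fun a => cnt_append w z a h]
  rw [cntPred_eq w z h]
  symm
  rcases Nat.eq_zero_or_pos z.length with hz | hz
  · simp [hz]
  rw [card_eq_sum_card_fiberwise (f := fun j => (z[j + w.length]?).getD (z[0])) (t := univ)
    (by simp)]
  refine sum_congr rfl fun b _ => ?_
  rw [filter_filter]
  congr 1
  ext j
  simp only [mem_filter, mem_range]
  refine and_congr_right fun hj => and_congr_right fun _ => ?_
  rw [List.getElem?_eq_getElem (by omega : j + w.length < z.length)]
  simp

theorem cntPred_le {D : ℕ} (w z : List (Fin D)) (h : w.length ≤ z.length) :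
    cntPred w z ≤ z.length := by
  rw [cntPred_eq w z h]
  exact (card_filter_le _ _).trans (by simp)

theorem Bpred_sum (D : ℕ) (hD : 0 < D) (xs : List (Fin D)) (k : ℕ) :
    ∑ a, Bpred D xs a k = 1 := by
  induction k with
  | zero => simp [Bpred]; field_simp
  | succ k ih =>
    simp only [Bpred]
    split_ifs with h
    · rw [← sum_div, sum_add_distrib, ih, ← cnt_sum _ _ (by simp)]
      push_cast
      rw [div_self]; positivity
    · exact ih

theorem Bpred_lower (D : ℕ) (hD : 0 < D) (xs : List (Fin D)) (a : Fin D) (k : ℕ) :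
    1 / (D * ((xs.length : ℝ) + 1) ^ k) ≤ Bpred D xs a k := by
  induction k with
  | zero => simp [Bpred]
  | succ k ih =>
    have h0 : (0:ℝ) ≤ 1 / (D * ((xs.length : ℝ) + 1) ^ k) := by positivity
    have e : 1 / (D * ((xs.length : ℝ) + 1) ^ (k+1)) =
      1 / (D * ((xs.length : ℝ) + 1) ^ k) / ((xs.length : ℝ) + 1) := by
        rw [pow_succ]; field_simp
    simp only [Bpred]
    split_ifs with h
    · have h2 : (cntPred (xs.drop (xs.length - k)) xs : ℝ) ≤ xs.length := by
        exact_mod_cast cntPred_le _ _ (by simp)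
      rw [e]
      have h3 : (0:ℝ) ≤ cnt (xs.drop (xs.length - k) ++ [a]) xs := by positivity
      have : 0 ≤ (cnt (xs.drop (xs.length - k) ++ [a]) xs : ℝ) + Bpred D xs a k := by linarith
      gcongr
      linarith
    · refine le_trans ?_ ih
      rw [e]
      apply div_le_self h0
      have : (0:ℝ) ≤ xs.length := by positivity
      linarith

theorem Bpred_pos (D : ℕ) (hD : 0 < D) (xs : List (Fin D)) (a : Fin D) (k : ℕ) :
    0 < Bpred D xs a k := lt_of_lt_of_le (by positivity) (Bpred_lower D hD xs a k)

theorem pref_length {D : ℕ} (x : ℕ → Fin D) (n : ℕ) : (pref x n).length = n := by simp [pref]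

theorem pref_drop_take {D : ℕ} (x : ℕ → Fin D) (n j l : ℕ) (h : j + l ≤ n) :
    ((pref x n).drop j).take l = pref (fun t => x (j + t)) l := by
  apply List.ext_getElem
  · simp [pref]; omega
  · intro i h1 h2
    simp [pref]

theorem pref_eq_iff {D : ℕ} (x y : ℕ → Fin D) (l : ℕ) :
    pref x l = pref y l ↔ (fun i : Fin l => x i) = (fun i : Fin l => y i) := by
  simp [pref, funext_iff, Fin.forall_iff]

theorem pref_congr {D : ℕ} (x y : ℕ → Fin D) (l : ℕ) (h : ∀ i < l, x i = y i) :
    pref x l = pref y l := by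
  simpa [pref] using h

/-- context block -/
def ctx {D : ℕ} (k : ℕ) (x : ℕ → Fin D) (i : ℕ) : Fin k → Fin D := fun t => x (i + t)

theorem Bpred_occ (D : ℕ) (x : ℕ → Fin D) (k i : ℕ) :
    Bpred D (pref x (i + k)) (x (i + k)) (k + 1) =
      ((occ (fun j => (ctx k x j, x (j + k))) i (ctx k x i, x (i + k)) : ℝ)
        + Bpred D (pref x (i + k)) (x (i + k)) k) / ((occ (ctx k x) i (ctx k x i) : ℝ) + 1) := by
  have hw : (pref x (i+k)).drop ((pref x (i+k)).length - k) = pref (fun t => x (i + t)) k := by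
    rw [← pref_drop_take x (i+k) i k le_rfl]
    rw [pref_length, Nat.add_sub_cancel, List.take_of_length_le]
    simp [pref_length]
  rw [Bpred, if_pos (by simp [pref_length]), hw]
  rw [cnt_append _ _ _ (by simp [pref_length]), cntPred_eq _ _ (by simp [pref_length])]
  simp only [pref_length, Nat.add_sub_cancel]
  congr 3
  ·
    unfold occ
    congr 1
    apply filter_congr
    intro j hj
    rw [mem_range] at hj
    rw [pref_drop_take _ _ _ _ (by omega), pref_eq_iff, Prod.mk.injEq]
    refine and_congr Iff.rfl ?_
    rw [List.getElem?_eq_getElem (by simp [pref_length]; omega)]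
    simp [pref]
  ·
    unfold occ
    congr 1
    apply filter_congr
    intro j hj
    rw [mem_range] at hj
    rw [pref_drop_take _ _ _ _ (by omega), pref_eq_iff]
    rfl

theorem Ppart_nonneg (D : ℕ) (hD : 0 < D) (p : ℕ → ℝ) (hp : ∀ n, p n ∈ Set.Ioo (0 : ℝ) 1)
    (x : ℕ → Fin D) (n : ℕ) (k : ℤ) : 0 ≤ Ppart D p x n k := by
  induction n generalizing k with
  | zero => simp [Ppart]
  | succ n ih =>
    rcases n with _ | n
    · have := hp 0
      have h1 : 0 ≤ 1 - p 0 := by linarith [this.2]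
      simp only [Ppart]
      split_ifs
      · exact mul_nonneg this.1.le (Bpred_pos D hD _ _ _).le
      · exact mul_nonneg h1 (Bpred_pos D hD _ _ _).le
      · exact le_rfl
    · have := hp (n+1)
      have h1 : 0 ≤ 1 - p (n+1) := by linarith [this.2]
      simp only [Ppart]
      split_ifs
      · exact mul_nonneg (add_nonneg (mul_nonneg this.1.le (ih _)) (mul_nonneg h1 (ih _)))
          (Bpred_pos D hD _ _ _).le
      · exact le_rfl

theorem Ppart_zero (D : ℕ) (p : ℕ → ℝ) (x : ℕ → Fin D) (n : ℕ) (k : ℤ) (h : k < -1 ∨ (n:ℤ) ≤ k) :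
    Ppart D p x n k = 0 := by
  rcases n with _ | _ | n
  · simp [Ppart]
  · simp only [Ppart]
    push_cast at h
    rw [if_neg (by omega), if_neg (by omega)]
  · simp only [Ppart]
    push_cast at h
    rw [if_neg (by omega)]

theorem Ppart_congr (D : ℕ) (p : ℕ → ℝ) (x y : ℕ → Fin D) (n : ℕ) (k : ℤ)
    (h : ∀ i < n, x i = y i) : Ppart D p x n k = Ppart D p y n k := by
  induction n generalizing k with
  | zero => simp [Ppart]
  | succ n ih =>
    have ih' := fun k => ih k (fun i hi => h i (by omega))
    rcases n with _ | n
    · simp only [Ppart, h 0 (by omega)]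
    · simp only [Ppart]
      rw [ih', ih', h (n+1) (by omega), pref_congr x y (n+1) (fun i hi => h i (by omega))]

theorem swP_congr (D : ℕ) (p : ℕ → ℝ) (x y : ℕ → Fin D) (n : ℕ)
    (h : ∀ i < n, x i = y i) : swP D p x n = swP D p y n := by
  unfold swP
  exact sum_congr rfl fun k _ => Ppart_congr D p x y n _ h

theorem swP_sum_one (D : ℕ) (hD : 0 < D) (p : ℕ → ℝ) (x : Fin D → ℕ → Fin D)
    (hx : ∀ a, x a 0 = a) : ∑ a, swP D p (x a) 1 = 1 := by
  unfold swP
  simp only [sum_range_succ, range_zero, sum_empty, Ppart]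
  simp only [Nat.cast_zero, Nat.cast_one, zero_sub, if_true, sub_self, zero_add]
  norm_num
  simp only [hx, sum_add_distrib, ← mul_sum, Bpred_sum D hD]
  ring

theorem swP_sum_succ (D : ℕ) (hD : 0 < D) (p : ℕ → ℝ) (n : ℕ) (x : Fin D → ℕ → Fin D)
    (y : ℕ → Fin D) (hx : ∀ a, x a (n+1) = a) (hy : ∀ a, ∀ i < n+1, x a i = y i) :
    ∑ a, swP D p (x a) (n+2) = swP D p y (n+1) := by
  have e : ∀ a, swP D p (x a) (n+2) = ∑ kk ∈ range (n+2+1),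
      (p (n + 1) * Ppart D p y (n + 1) ((kk:ℤ) - 1) +
        (1 - p (n + 1)) * Ppart D p y (n + 1) ((kk : ℤ) - 1 - 1)) *
        Bpred D (pref y (n + 1)) a kk := by
    intro a
    unfold swP
    refine sum_congr rfl fun kk hk => ?_
    rw [mem_range] at hk
    simp only [Ppart]
    rw [if_pos (by omega), hx, pref_congr _ y (n+1) (hy a), Ppart_congr D p _ y _ _ (hy a),
      Ppart_congr D p _ y _ _ (hy a)]
    congr 2
    omega
  simp_rw [e]
  rw [sum_comm]
  simp_rw [← mul_sum, Bpred_sum D hD, mul_one, sum_add_distrib, ← mul_sum]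
  have e1 : ∑ kk ∈ range (n+2+1), Ppart D p y (n + 1) ((kk:ℤ) - 1) = swP D p y (n+1) := by
    rw [sum_range_succ, Ppart_zero D p y (n+1) _ (by right; push_cast; omega), add_zero]
    rfl
  have e2 : ∑ kk ∈ range (n+2+1), Ppart D p y (n + 1) ((kk:ℤ) - 1 - 1) = swP D p y (n+1) := by
    rw [sum_range_succ', Ppart_zero D p y (n+1) (((0:ℕ):ℤ) - 1 - 1) (by left; norm_num),
      add_zero]
    unfold swP
    refine sum_congr rfl fun kk _ => ?_
    congr 1; push_cast; ring
  rw [e1, e2]; ring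

/-- extension of finite blocks -/
def extb {D : ℕ} (d : Fin D) {n : ℕ} (v : Fin n → Fin D) : ℕ → Fin D :=
  fun j => if h : j < n then v ⟨j, h⟩ else d

theorem extb_snoc_last {D : ℕ} (d : Fin D) {n : ℕ} (v : Fin n → Fin D) (a : Fin D) :
    extb d (Fin.snoc v a : Fin (n+1) → Fin D) n = a := by
  simp [extb, Fin.snoc]

theorem extb_snoc {D : ℕ} (d : Fin D) {n : ℕ} (v : Fin n → Fin D) (a : Fin D) (i : ℕ) (h : i < n) :
    extb d (Fin.snoc v a : Fin (n+1) → Fin D) i = extb d v i := by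
  have : i < n + 1 := by omega
  simp [extb, Fin.snoc, h, this]

theorem sum_snoc {D : ℕ} {n : ℕ} (f : (Fin (n+1) → Fin D) → ℝ) :
    ∑ v, f v = ∑ u : Fin n → Fin D, ∑ a, f (Fin.snoc u a) := by
  rw [← (Fin.snocEquiv (fun _ : Fin (n+1) => Fin D)).sum_comp, Fintype.sum_prod_type, sum_comm]
  rfl

theorem swP_total (D : ℕ) (d : Fin D) (p : ℕ → ℝ) (n : ℕ) :
    ∑ v : Fin (n+1) → Fin D, swP D p (extb d v) (n+1) = 1 := by
  have hD : 0 < D := d.pos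
  induction n with
  | zero =>
    rw [sum_snoc]
    simp only [univ_unique, sum_singleton]
    exact swP_sum_one D hD p _ (fun a => extb_snoc_last d _ a)
  | succ n ih =>
    rw [sum_snoc, ← ih]
    refine sum_congr rfl fun u _ => ?_
    exact swP_sum_succ D hD p n _ _ (fun a => extb_snoc_last d u a)
      (fun a i hi => extb_snoc d u a i hi)

/-- lower bound by a single order. -/
theorem Ppart_diag (D : ℕ) (hD : 0 < D) (p : ℕ → ℝ) (hp : ∀ n, p n ∈ Set.Ioo (0 : ℝ) 1) (k : ℕ) :
    ∃ c > 0, ∀ x : ℕ → Fin D, c ≤ Ppart D p x (k+1) k := by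
  induction k with
  | zero =>
    have := hp 0
    refine ⟨(1 - p 0) * (1 / (D * (((0:ℕ) : ℝ) + 1) ^ 1)), ?_, fun x => ?_⟩
    · have : 0 < 1 - p 0 := by linarith [this.2]
      positivity
    · simp only [Ppart]
      rw [if_neg (by simp), if_pos (by simp)]
      refine mul_le_mul_of_nonneg_left ?_ (by linarith [this.2])
      simpa using Bpred_lower D hD [] (x 0) 1
  | succ k ih =>
    obtain ⟨c, hc, h⟩ := ih
    have := hp (k+1)
    have h1 : 0 < 1 - p (k+1) := by linarith [this.2]
    refine ⟨(1 - p (k+1)) * c * (1 / (D * (((k+1:ℕ) : ℝ) + 1) ^ (k+2))), by positivity, fun x => ?_⟩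
    simp only [Ppart]
    rw [if_pos (by push_cast; omega)]
    have e : (((k+1:ℕ) : ℤ) + 1).toNat = k + 2 := by omega
    have e' : (((k+1:ℕ) : ℤ) - 1) = k := by omega
    rw [e, e']
    have h2 := Bpred_lower D hD (pref x (k+1)) (x (k+1)) (k+2)
    rw [pref_length] at h2
    refine mul_le_mul ?_ h2 (by positivity) ?_
    · have := mul_nonneg this.1.le (Ppart_nonneg D hD p hp x (k+1) ((k+1:ℕ):ℤ))
      nlinarith [h x]
    · exact add_nonneg (mul_nonneg this.1.le (Ppart_nonneg D hD p hp _ _ _))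
        (mul_nonneg h1.le (Ppart_nonneg D hD p hp _ _ _))

theorem Bpred_le_one (D : ℕ) (hD : 0 < D) (xs : List (Fin D)) (a : Fin D) (k : ℕ) :
    Bpred D xs a k ≤ 1 := by
  rw [← Bpred_sum D hD xs k]
  exact single_le_sum (f := fun a => Bpred D xs a k) (fun b _ => (Bpred_pos D hD xs b k).le)
    (mem_univ a)

theorem Ppart_lower (D : ℕ) (hD : 0 < D) (p : ℕ → ℝ) (hp : ∀ n, p n ∈ Set.Ioo (0 : ℝ) 1) (k : ℕ)
    (c : ℝ) (hc : 0 < c) (x : ℕ → Fin D) (h : c ≤ Ppart D p x (k+1) k) (n : ℕ) :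
    c * (∏ i ∈ range (n+1), p (i + k)) *
      ∏ i ∈ range (n+1), Bpred D (pref x (i+k)) (x (i+k)) (k+1) ≤ Ppart D p x (n+1+k) k := by
  induction n with
  | zero =>
    simp only [zero_add, range_one, prod_singleton]
    rw [add_comm 1 k]
    refine le_trans ?_ h
    have h1 := hp k
    have h2 := Bpred_le_one D hD (pref x k) (x k) (k+1)
    have h3 := (Bpred_pos D hD (pref x k) (x k) (k+1)).le
    calc c * p k * Bpred D (pref x k) (x k) (k+1) ≤ c * 1 * 1 := by
          have := h1.2.le
          gcongr
      _ = c := by ring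
  | succ n ih =>
    rw [prod_range_succ, prod_range_succ _ (n+1)]
    have e : n + 1 + 1 + k = (n + k) + 2 := by ring
    have e2 : n + 1 + k = n + k + 1 := by ring
    rw [e]
    simp only [Ppart]
    rw [if_pos (by push_cast; omega)]
    have e3 : ((k:ℤ) + 1).toNat = k + 1 := by omega
    rw [e3]
    rw [e2] at ih ⊢
    have h1 := hp (n+k+1)
    have hB := (Bpred_pos D hD (pref x (n+k+1)) (x (n+k+1)) (k+1)).le
    have h4 := mul_nonneg (by linarith [h1.2] : 0 ≤ 1 - p (n+k+1))
      (Ppart_nonneg D hD p hp x (n+k+1) ((k:ℤ)-1))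
    have h5 := mul_le_mul_of_nonneg_left ih h1.1.le
    refine le_trans (le_of_eq ?_) (mul_le_mul_of_nonneg_right (h5.trans (by linarith)) hB)
    ring

theorem swP_lower (D : ℕ) (hD : 0 < D) (p : ℕ → ℝ) (hp : ∀ n, p n ∈ Set.Ioo (0 : ℝ) 1)
    (L : ℝ) (hL : 0 < L) (hLim : Tendsto (fun N : ℕ => ∏ i ∈ range N, p i) atTop (𝓝 L)) (k : ℕ) :
    ∃ c > 0, ∀ x : ℕ → Fin D, ∀ n : ℕ,
      c * ∏ i ∈ range (n+1), Bpred D (pref x (i+k)) (x (i+k)) (k+1) ≤ swP D p x (n+1+k) := by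
  obtain ⟨c, hc, h⟩ := Ppart_diag D hD p hp k
  refine ⟨c * L, by positivity, fun x n => ?_⟩
  have hP0 : ∀ N, 0 ≤ ∏ i ∈ range N, p i := fun N => prod_nonneg fun i _ => (hp i).1.le
  have hanti : Antitone (fun N : ℕ => ∏ i ∈ range N, p i) := by
    refine antitone_nat_of_succ_le fun N => ?_
    rw [prod_range_succ]
    exact mul_le_of_le_one_right (hP0 N) (hp N).2.le
  have h1 : L ≤ ∏ i ∈ range (n+1), p (i + k) := by
    refine (hanti.le_of_tendsto hLim (k + (n+1))).trans ?_

    rw [prod_range_add]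
    simp_rw [add_comm k]
    refine mul_le_of_le_one_left (prod_nonneg fun i _ => (hp _).1.le) ?_
    exact prod_le_one (fun i _ => (hp i).1.le) (fun i _ => (hp i).2.le)
  have h2 := Ppart_lower D hD p hp k c hc x (h x) n
  have h3 : Ppart D p x (n+1+k) k ≤ swP D p x (n+1+k) := by
    unfold swP
    have := single_le_sum (s := range (n+1+k+1))
      (f := fun kk : ℕ => Ppart D p x (n+1+k) ((kk:ℤ) - 1))
      (fun i _ => Ppart_nonneg D hD p hp _ _ _) (a := k+1) (by simp)
    simpa using this
  refine le_trans ?_ (h2.trans h3)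
  have : 0 ≤ ∏ i ∈ range (n+1), Bpred D (pref x (i+k)) (x (i+k)) (k+1) :=
    prod_nonneg fun i _ => (Bpred_pos D hD _ _ _).le
  gcongr

theorem swP_theta (D : ℕ) (hD : 0 < D) (p : ℕ → ℝ) (hp : ∀ n, p n ∈ Set.Ioo (0 : ℝ) 1)
    (L : ℝ) (hL : 0 < L) (hLim : Tendsto (fun N : ℕ => ∏ i ∈ range N, p i) atTop (𝓝 L)) (k : ℕ)
    (θ : (Fin k → Fin D) → Fin D → ℝ) (h0 : ∀ w a, 0 ≤ θ w a) (h1 : ∀ w, ∑ a, θ w a ≤ 1) :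
    ∃ c > 0, ∃ M : ℕ, ∀ x : ℕ → Fin D, ∀ n : ℕ,
      c * (1 / (D * ((n + 1 + k + 1 : ℕ) : ℝ) ^ (k+1))) ^ M *
        ∏ i ∈ range (n+1), θ (ctx k x i) (x (i+k)) ≤ swP D p x (n+1+k) := by
  obtain ⟨c, hc, h⟩ := swP_lower D hD p hp L hL hLim k
  refine ⟨c, hc, Fintype.card ((Fin k → Fin D) × Fin D), fun x n => (le_trans ?_ (h x n))⟩
  have hD1 : (1:ℝ) ≤ D := by exact_mod_cast hD
  set N : ℝ := ((n + 1 + k + 1 : ℕ) : ℝ) with hN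
  have hN1 : (1:ℝ) ≤ N := by rw [hN]; exact_mod_cast (by omega)
  set δ : ℝ := 1 / (D * N ^ k) with hδ
  have hδ0 : 0 < δ := by positivity
  have hδ1 : δ ≤ 1 := by
    rw [hδ, div_le_one (by positivity)]
    exact one_le_mul_of_one_le_of_one_le hD1 (one_le_pow₀ hN1)
  have hr := regret θ h0 h1 (ctx k x) (fun i => x (i+k)) (n+1) δ hδ0 hδ1
  rw [mul_assoc]
  refine mul_le_mul_of_nonneg_left ?_ hc.le
  have hpr : 0 ≤ ∏ i ∈ range (n+1), θ (ctx k x i) (x (i+k)) := prod_nonneg fun _ _ => h0 _ _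
  have s1 : 1 / (D * N ^ (k+1)) ≤ δ / ((n+1:ℕ) + 1) := by
    have : 1 / (D * N ^ (k+1)) = δ / N := by rw [hδ, pow_succ]; field_simp
    rw [this]
    have : ((n+1:ℕ):ℝ) + 1 ≤ N := by rw [hN]; push_cast; linarith [(Nat.cast_nonneg k : (0:ℝ) ≤ k)]
    gcongr
  refine (mul_le_mul_of_nonneg_right (pow_le_pow_left₀ (by positivity) s1 _) hpr).trans
    (hr.trans ?_)
  refine prod_le_prod (fun _ _ => by positivity) fun i hi => ?_
  rw [mem_range] at hi
  rw [Bpred_occ]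
  have h2 := Bpred_lower D hD (pref x (i+k)) (x (i+k)) k
  rw [pref_length] at h2
  have h3 : δ ≤ 1 / (D * (((i+k : ℕ) : ℝ) + 1) ^ k) := by
    rw [hδ]
    have : ((i+k : ℕ) : ℝ) + 1 ≤ N := by rw [hN]; exact_mod_cast (by omega)
    gcongr
  have := h3.trans h2
  gcongr

theorem cyl_meas (D : ℕ) (x : ℕ → Fin D) (n : ℕ) : MeasurableSet (cylSet D x n) := by
  unfold cylSet
  simp only [Set.ofPred_forall]
  refine MeasurableSet.iInter fun i => MeasurableSet.iInter fun _ => ?_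
  exact measurableSet_eq_fun (measurable_pi_apply _) measurable_const

theorem cyl_congr (D : ℕ) (x y : ℕ → Fin D) (n : ℕ) (h : ∀ i < n, x i = y i) :
    cylSet D x n = cylSet D y n := by
  ext ω
  simp only [cylSet, Set.mem_ofPred_eq]
  exact forall₂_congr fun i hi => by rw [h i hi]

theorem Qstr_congr (D : ℕ) (Q : Measure (Omega D)) (x y : ℕ → Fin D) (n : ℕ)
    (h : ∀ i < n, x i = y i) : Qstr D Q x n = Qstr D Q y n := by
  unfold Qstr; rw [cyl_congr D x y n h]

/-- first block -/
def blk (D n : ℕ) (ω : Omega D) : Fin n → Fin D := fun i => path D ω i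

theorem blk_meas (D n : ℕ) : Measurable (blk D n) := by
  unfold blk path
  fun_prop

theorem extb_blk (D n : ℕ) (d : Fin D) (ω : Omega D) (i : ℕ) (h : i < n) :
    extb d (blk D n ω) i = path D ω i := by
  simp [extb, blk, h]

theorem blk_preimage (D n : ℕ) (d : Fin D) (v : Fin n → Fin D) :
    blk D n ⁻¹' {v} = cylSet D (extb d v) n := by
  ext ω
  simp only [Set.mem_preimage, Set.mem_singleton_iff, cylSet, Set.mem_ofPred_eq, funext_iff,
    Fin.forall_iff, blk, path, extb]
  exact forall₂_congr fun i hi => by simp [hi]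

theorem integrable_blk (D n : ℕ) (Q : Measure (Omega D)) [IsProbabilityMeasure Q]
    (d : Fin D) (f : (ℕ → Fin D) → ℝ) (hf : ∀ x y, (∀ i < n, x i = y i) → f x = f y) :
    Integrable (fun ω => f (path D ω)) Q := by
  have e : (fun ω => f (path D ω)) = (fun v => f (extb d v)) ∘ blk D n := by
    funext ω
    exact hf _ _ fun i hi => (extb_blk D n d ω i hi).symm
  rw [e]
  have := Measure.isProbabilityMeasure_map (μ := Q) (blk_meas D n).aemeasurable
  exact Integrable.comp_measurable (Integrable.of_finite) (blk_meas D n)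

theorem integral_blk (D n : ℕ) (Q : Measure (Omega D)) [IsProbabilityMeasure Q]
    (d : Fin D) (f : (ℕ → Fin D) → ℝ) (hf : ∀ x y, (∀ i < n, x i = y i) → f x = f y) :
    ∫ ω, f (path D ω) ∂Q = ∑ v : Fin n → Fin D, Qstr D Q (extb d v) n * f (extb d v) := by
  have e : (fun ω => f (path D ω)) = fun ω => (fun v => f (extb d v)) (blk D n ω) := by
    funext ω
    exact hf _ _ fun i hi => (extb_blk D n d ω i hi).symm
  rw [e]
  have := Measure.isProbabilityMeasure_map (μ := Q) (blk_meas D n).aemeasurable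
  rw [← integral_map (φ := blk D n) (f := fun v => f (extb d v)) (blk_meas D n).aemeasurable
    (Integrable.of_finite).aestronglyMeasurable]
  rw [integral_fintype Integrable.of_finite]
  refine sum_congr rfl fun v _ => ?_
  rw [smul_eq_mul]
  congr 1
  rw [Measure.real, Measure.map_apply (blk_meas D n) (measurableSet_singleton _),
    blk_preimage D n d]
  rfl

theorem Qstr_total (D n : ℕ) (Q : Measure (Omega D)) [IsProbabilityMeasure Q] (d : Fin D) :
    ∑ v : Fin n → Fin D, Qstr D Q (extb d v) n = 1 := by
  have := integral_blk D n Q d (fun _ => 1) (fun _ _ _ => rfl)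
  simpa using this.symm

theorem Qstr_nonneg (D n : ℕ) (Q : Measure (Omega D)) (x : ℕ → Fin D) : 0 ≤ Qstr D Q x n :=
  ENNReal.toReal_nonneg

theorem Qstr_ae_pos (D n : ℕ) (Q : Measure (Omega D)) [IsProbabilityMeasure Q] (d : Fin D) :
    ∀ᵐ ω ∂Q, 0 < Qstr D Q (path D ω) n := by
  have h : ∀ v : Fin n → Fin D, ∀ᵐ ω ∂Q, blk D n ω = v → 0 < Qstr D Q (path D ω) n := by
    intro v
    by_cases hv : Q (cylSet D (extb d v) n) = 0
    · rw [← blk_preimage] at hv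
      have : ∀ᵐ ω ∂Q, ω ∉ blk D n ⁻¹' {v} := measure_eq_zero_iff_ae_notMem.1 hv
      filter_upwards [this] with ω hω h
      exact absurd h hω
    · refine Eventually.of_forall fun ω hω => ?_
      rw [Qstr_congr D Q _ (extb d v) n (fun i hi => by rw [← hω, extb_blk _ _ _ _ _ hi])]
      exact ENNReal.toReal_pos hv (measure_ne_top _ _)
  filter_upwards [ae_all_iff.2 h] with ω hω
  exact hω _ rfl

theorem Qstr_sum_le (D n : ℕ) (Q : Measure (Omega D)) [IsProbabilityMeasure Q] (d : Fin D)
    (w : Fin n → Fin D) :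
    ∑ a, Qstr D Q (extb d (Fin.snoc w a : Fin (n+1) → Fin D)) (n+1) ≤ Qstr D Q (extb d w) n := by
  have hdis : Set.PairwiseDisjoint (↑(univ : Finset (Fin D)))
      (fun a => cylSet D (extb d (Fin.snoc w a : Fin (n+1) → Fin D)) (n+1)) := by
    intro a _ b _ hab
    refine Set.disjoint_left.2 fun ω h1 h2 => hab ?_
    have h1 := h1 n (by omega)
    have h2 := h2 n (by omega)
    rw [extb_snoc_last] at h1 h2
    exact h1.symm.trans h2
  have := measureReal_biUnion_finset (μ := Q) hdis (fun a _ => cyl_meas D _ _)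
  change ∑ a, Q.real _ ≤ Q.real _
  rw [← this]
  refine measureReal_mono ?_
  intro ω hω
  simp only [mem_univ, Set.iUnion_true, Set.mem_iUnion] at hω
  obtain ⟨a, ha⟩ := hω
  intro i hi
  rw [ha i (by omega), extb_snoc _ _ _ _ hi]

theorem gibbs (D : ℕ) (d : Fin D) (p : ℕ → ℝ) (Q : Measure (Omega D)) [IsProbabilityMeasure Q]
    (n : ℕ) (hpos : ∀ x, 0 < swP D p x (n+1)) :
    ∫ ω, -Real.log (Qstr D Q (path D ω) (n+1)) ∂Q ≤
      ∫ ω, -Real.log (swP D p (path D ω) (n+1)) ∂Q := by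
  rw [integral_blk D (n+1) Q d (fun x => -Real.log (Qstr D Q x (n+1)))
    (fun x y h => by rw [Qstr_congr D Q x y _ h])]
  rw [integral_blk D (n+1) Q d (fun x => -Real.log (swP D p x (n+1)))
    (fun x y h => by rw [swP_congr D p x y _ h])]
  rw [← sub_nonneg, ← sum_sub_distrib]
  have h : ∀ v : Fin (n+1) → Fin D, Qstr D Q (extb d v) (n+1) - swP D p (extb d v) (n+1) ≤
      Qstr D Q (extb d v) (n+1) * -Real.log (swP D p (extb d v) (n+1)) -
      Qstr D Q (extb d v) (n+1) * -Real.log (Qstr D Q (extb d v) (n+1)) := by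
    intro v
    have hP := hpos (extb d v)
    rcases (Qstr_nonneg D (n+1) Q (extb d v)).eq_or_lt with h0 | h0
    · rw [← h0]; simp; exact hP.le
    · set q := Qstr D Q (extb d v) (n+1)
      set P := swP D p (extb d v) (n+1)
      have h1 := Real.log_le_sub_one_of_pos (div_pos hP h0)
      rw [Real.log_div hP.ne' h0.ne'] at h1
      have h2 := mul_le_mul_of_nonneg_left h1 h0.le
      have h3 : q * (P / q - 1) = P - q := by field_simp
      rw [h3] at h2
      linarith
  refine le_trans ?_ (sum_le_sum fun v _ => h v)
  rw [sum_sub_distrib, Qstr_total, swP_total]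
  simp

theorem shift_iter (D : ℕ) (Q : Measure (Omega D)) (hstat : MeasurePreserving (shiftT D) Q Q)
    (i : ℕ) : MeasurePreserving ((shiftT D)^[i]) Q Q := hstat.iterate i

theorem path_shift (D : ℕ) (ω : Omega D) (i j : ℕ) :
    path D ((shiftT D)^[i] ω) j = path D ω (i + j) := by
  induction i generalizing ω with
  | zero => simp
  | succ i ih =>
    rw [Function.iterate_succ_apply, ih]
    simp only [path, shiftT]
    congr 1; push_cast; ring

/-- conditional probability -/
noncomputable def thet (D k : ℕ) (Q : Measure (Omega D)) (d : Fin D) (w : Fin k → Fin D) (a : Fin D) : ℝ :=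
  Qstr D Q (extb d (Fin.snoc w a : Fin (k+1) → Fin D)) (k+1) / Qstr D Q (extb d w) k

theorem thet_eq (D k : ℕ) (Q : Measure (Omega D)) (d : Fin D) (ω : Omega D) (i : ℕ) :
    thet D k Q d (ctx k (path D ω) i) (path D ω (i+k)) =
      Qstr D Q (path D ((shiftT D)^[i] ω)) (k+1) / Qstr D Q (path D ((shiftT D)^[i] ω)) k := by
  unfold thet
  have e : ∀ j < k, extb d (ctx k (path D ω) i) j = path D ((shiftT D)^[i] ω) j := by
    intro j hj
    rw [path_shift]
    simp [extb, ctx, hj]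
  rw [Qstr_congr D Q _ _ k e]
  congr 1
  apply Qstr_congr
  intro j hj
  rcases Nat.lt_or_ge j k with h | h
  · rw [extb_snoc _ _ _ _ h, e j h]
  · have : j = k := by omega
    subst this
    rw [extb_snoc_last, path_shift]

/-- block entropy -/
noncomputable def Hn (D : ℕ) (Q : Measure (Omega D)) (n : ℕ) : ℝ :=
  ∫ ω, -Real.log (Qstr D Q (path D ω) n) ∂Q

theorem Hn_zero (D : ℕ) (Q : Measure (Omega D)) [IsProbabilityMeasure Q] : Hn D Q 0 = 0 := by
  simp [Hn, Qstr, cylSet]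

theorem logthet_integrable (D k : ℕ) (Q : Measure (Omega D)) [IsProbabilityMeasure Q] (d : Fin D)
    (i : ℕ) :
    Integrable (fun ω => -Real.log (thet D k Q d (ctx k (path D ω) i) (path D ω (i+k)))) Q := by
  refine integrable_blk D (i+k+1) Q d
    (fun x => -Real.log (thet D k Q d (ctx k x i) (x (i+k)))) (fun x y h => ?_)
  have : ctx k x i = ctx k y i := by
    funext t; exact h _ (by omega)
  simp only [this, h (i+k) (by omega)]

theorem logthet_integral (D k : ℕ) (Q : Measure (Omega D)) [IsProbabilityMeasure Q] (d : Fin D)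
    (hstat : MeasurePreserving (shiftT D) Q Q) (i : ℕ) :
    ∫ ω, -Real.log (thet D k Q d (ctx k (path D ω) i) (path D ω (i+k))) ∂Q =
      Hn D Q (k+1) - Hn D Q k := by
  have int : ∀ n, Integrable (fun ω => -Real.log (Qstr D Q (path D ω) n)) Q := fun n =>
    integrable_blk D n Q d (fun x => -Real.log (Qstr D Q x n))
      (fun x y h => by rw [Qstr_congr D Q x y _ h])
  simp_rw [thet_eq]
  have hT := shift_iter D Q hstat i
  have e : ∫ ω, -Real.log (Qstr D Q (path D ω) (k+1) / Qstr D Q (path D ω) k) ∂Q =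
      ∫ ω, -Real.log (Qstr D Q (path D ((shiftT D)^[i] ω)) (k+1) /
        Qstr D Q (path D ((shiftT D)^[i] ω)) k) ∂Q := by
    have hi := integrable_blk D (k+1) Q d (fun x => -Real.log (Qstr D Q x (k+1) / Qstr D Q x k))
      (fun x y h => by
        simp only [Qstr_congr D Q x y _ h, Qstr_congr D Q x y k (fun i hi => h i (by omega))])
    have := integral_map (μ := Q) hT.measurable.aemeasurable (f := fun ω =>
      -Real.log (Qstr D Q (path D ω) (k+1) / Qstr D Q (path D ω) k))
      (by rw [hT.map_eq]; exact hi.aestronglyMeasurable)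
    rw [hT.map_eq] at this
    exact this
  rw [← e]
  unfold Hn
  rw [← integral_sub (int _) (int _)]
  apply integral_congr_ae
  filter_upwards [Qstr_ae_pos D (k+1) Q d, Qstr_ae_pos D k Q d] with ω h1 h2
  rw [Real.log_div h1.ne' h2.ne']
  ring

theorem thet_ae_pos (D k : ℕ) (Q : Measure (Omega D)) [IsProbabilityMeasure Q] (d : Fin D)
    (hstat : MeasurePreserving (shiftT D) Q Q) :
    ∀ᵐ ω ∂Q, ∀ i, 0 < thet D k Q d (ctx k (path D ω) i) (path D ω (i+k)) := by
  rw [ae_all_iff]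
  intro i
  have hT := (shift_iter D Q hstat i).quasiMeasurePreserving
  filter_upwards [hT.ae (Qstr_ae_pos D (k+1) Q d), hT.ae (Qstr_ae_pos D k Q d)] with ω h1 h2
  rw [thet_eq]
  exact div_pos h1 h2

theorem upper (D : ℕ) (d : Fin D) (p : ℕ → ℝ) (hp : ∀ n, p n ∈ Set.Ioo (0 : ℝ) 1)
    (L : ℝ) (hL : 0 < L) (hLim : Tendsto (fun N : ℕ => ∏ i ∈ range N, p i) atTop (𝓝 L))
    (Q : Measure (Omega D)) [IsProbabilityMeasure Q]
    (hstat : MeasurePreserving (shiftT D) Q Q) (k : ℕ) :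
    ∃ C M : ℝ, 0 ≤ M ∧ ∀ n : ℕ, ∫ ω, -Real.log (swP D p (path D ω) (n+1+k)) ∂Q ≤
      C + M * Real.log ((n+1+k+1 : ℕ) : ℝ) + (n+1) * (Hn D Q (k+1) - Hn D Q k) := by
  have hD : 0 < D := d.pos
  have h0 : ∀ w a, 0 ≤ thet D k Q d w a := fun w a =>
    div_nonneg (Qstr_nonneg _ _ _ _) (Qstr_nonneg _ _ _ _)
  have h1 : ∀ w, ∑ a, thet D k Q d w a ≤ 1 := by
    intro w
    unfold thet
    rw [← sum_div]
    exact div_le_one_of_le₀ (Qstr_sum_le D k Q d w) (Qstr_nonneg _ _ _ _)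
  obtain ⟨c, hc, M, h⟩ := swP_theta D hD p hp L hL hLim k (thet D k Q d) h0 h1
  refine ⟨-Real.log c + M * Real.log D, M * (k+1), by positivity, fun n => ?_⟩
  set N : ℝ := ((n+1+k+1 : ℕ) : ℝ) with hN
  have hN0 : 0 < N := by rw [hN]; positivity
  have hD0 : (0:ℝ) < D := by exact_mod_cast hD
  have hpt : ∀ᵐ ω ∂Q, -Real.log (swP D p (path D ω) (n+1+k)) ≤
      (-Real.log c + M * Real.log D + M * (k+1) * Real.log N) +
      ∑ i ∈ range (n+1), -Real.log (thet D k Q d (ctx k (path D ω) i) (path D ω (i+k))) := by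
    filter_upwards [thet_ae_pos D k Q d hstat] with ω hω
    have h2 := h (path D ω) n
    rw [← hN] at h2
    have hpr : 0 < ∏ i ∈ range (n+1), thet D k Q d (ctx k (path D ω) i) (path D ω (i+k)) :=
      prod_pos fun i _ => hω i
    have hq : (0:ℝ) < 1 / (D * N ^ (k+1)) := by positivity
    have h3 := Real.log_le_log (by positivity) h2
    rw [Real.log_mul (by positivity) hpr.ne', Real.log_mul hc.ne' (by positivity), Real.log_pow,
      one_div, Real.log_inv, Real.log_mul hD0.ne' (by positivity), Real.log_pow,
      Real.log_prod (fun i _ => (hω i).ne')] at h3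
    rw [sum_neg_distrib]
    push_cast at h3
    linarith
  have i1 := integrable_blk D (n+1+k) Q d (fun x => -Real.log (swP D p x (n+1+k)))
      (fun x y h => by rw [swP_congr D p x y _ h])
  have i2 := integrable_finsetSum (μ := Q) (range (n+1)) (fun i _ => logthet_integrable D k Q d i)
  refine (integral_mono_ae i1 ((integrable_const _).add i2) hpt).trans (le_of_eq ?_)
  simp only [Pi.add_apply]
  rw [integral_add (integrable_const _) i2,
    integral_finsetSum _ (fun i _ => logthet_integrable D k Q d i)]
  simp_rw [logthet_integral D k Q d hstat]
  simp
  ring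

theorem exists_small (D : ℕ) (Q : Measure (Omega D)) [IsProbabilityMeasure Q] (hQ : ℝ)
    (hent : Tendsto (fun n : ℕ => Hn D Q n / n) atTop (𝓝 hQ)) (r : ℝ) (hr : hQ < r) :
    ∃ k, Hn D Q (k+1) - Hn D Q k < r := by
  by_contra! hcon
  have h1 : ∀ n : ℕ, n * r ≤ Hn D Q n := by
    intro n
    induction n with
    | zero => simp [Hn_zero]
    | succ n ih => push_cast; linarith [hcon n]
  have : r ≤ hQ := by
    refine ge_of_tendsto hent ?_
    filter_upwards [eventually_gt_atTop 0] with n hn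
    rw [le_div_iff₀ (by exact_mod_cast hn)]
    linarith [h1 n]
  linarith

theorem rate_lim (C M h : ℝ) (k : ℕ) :
    Tendsto (fun n : ℕ => (C + M * Real.log ((n+1+k+1 : ℕ) : ℝ) + (n+1) * h) / ((n+1+k : ℕ) : ℝ))
      atTop (𝓝 h) := by
  have hc : Tendsto (fun n : ℕ => ((n+1+k : ℕ) : ℝ)) atTop atTop := by
    refine tendsto_natCast_atTop_atTop.comp ?_
    exact tendsto_atTop_mono (fun n => by omega : ∀ n, n ≤ n+1+k) tendsto_id
  have t1 : ∀ c : ℝ, Tendsto (fun n : ℕ => c / ((n+1+k : ℕ) : ℝ)) atTop (𝓝 0) := fun c =>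
    hc.const_div_atTop c
  have t2 : Tendsto (fun n : ℕ => Real.log ((n+1+k+1 : ℕ) : ℝ) / ((n+1+k : ℕ) : ℝ)) atTop (𝓝 0) := by
    have h0 : Tendsto (fun x : ℝ => Real.log (x) / x) atTop (𝓝 0) :=
      Real.isLittleO_log_id_atTop.tendsto_div_nhds_zero
    have h1 := h0.comp hc
    have h2 := h1.add (t1 (Real.log 2))
    rw [add_zero] at h2
    refine squeeze_zero (fun n => ?_) (fun n => ?_) h2
    · exact div_nonneg (Real.log_natCast_nonneg _) (by positivity)
    · simp only [Function.comp]
      rw [← add_div, ← Real.log_mul (by positivity) (by norm_num)]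
      refine div_le_div_of_nonneg_right (Real.log_le_log (by positivity) ?_) (by positivity)
      push_cast; linarith [(Nat.cast_nonneg n : (0:ℝ) ≤ n), (Nat.cast_nonneg k : (0:ℝ) ≤ k)]
  have t3 := ((t1 (C - k * h)).add (t2.const_mul M)).add_const h
  simp only [mul_zero, zero_add] at t3
  refine t3.congr fun n => ?_
  have : ((n+1+k : ℕ) : ℝ) ≠ 0 := by positivity
  field_simp
  push_cast
  ring

end switchproof

/-- The plain switch distribution is weakly universal: for every stationary
probability measure `Q` on `Ω = {1,...,D}^ℤ`,
`lim_{n→∞} (1/n)·E_Q[−log P(X_1^n)] = h_Q`, where `h_Q` is the entropy rate of `Q`. -/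
theorem plain_switch_weakly_universal
    (D : ℕ) (hD : 2 ≤ D) (p : ℕ → ℝ) (hp : ∀ n, p n ∈ Set.Ioo (0 : ℝ) 1)
    (hprod : ∃ L, 0 < L ∧ Tendsto (fun N : ℕ => ∏ i ∈ Finset.range N, p i) atTop (𝓝 L))
    (Q : Measure (Omega D)) [IsProbabilityMeasure Q]
    (hstat : MeasurePreserving (shiftT D) Q Q)
    (hQ : ℝ)
    (hent : Tendsto
      (fun n : ℕ => (∫ ω, -Real.log (Qstr D Q (path D ω) n) ∂Q) / n) atTop (𝓝 hQ)) :
    Tendsto (fun n : ℕ => (∫ ω, -Real.log (swP D p (path D ω) n) ∂Q) / n) atTop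
      (𝓝 hQ) := by
  obtain ⟨L, hL, hLim⟩ := hprod
  have hD0 : 0 < D := by omega
  let d : Fin D := ⟨0, hD0⟩
  have hpos : ∀ n x, 0 < swP D p x (n+1) := by
    intro n x
    obtain ⟨c, hc, h⟩ := swP_lower D hD0 p hp L hL hLim 0
    exact lt_of_lt_of_le (mul_pos hc (Finset.prod_pos fun i _ => Bpred_pos D hD0 _ _ _)) (h x n)
  have hent' : Tendsto (fun n : ℕ => Hn D Q n / n) atTop (𝓝 hQ) := hent
  rw [tendsto_order]
  constructor
  · intro r hr
    filter_upwards [hent'.eventually (lt_mem_nhds hr), eventually_gt_atTop 0] with n hn hn0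
    obtain ⟨m, rfl⟩ : ∃ m, n = m + 1 := ⟨n - 1, by omega⟩
    refine hn.trans_le ?_
    exact div_le_div_of_nonneg_right (gibbs D d p Q m (hpos m)) (by positivity)
  · intro r hr
    obtain ⟨k, hk⟩ := exists_small D Q hQ hent' r hr
    obtain ⟨C, M, hM, h⟩ := upper D d p hp L hL hLim Q hstat k
    have hl := rate_lim C M (Hn D Q (k+1) - Hn D Q k) k
    obtain ⟨N, hN⟩ := eventually_atTop.1 (hl.eventually (gt_mem_nhds hk))
    filter_upwards [eventually_ge_atTop (N + 1 + k)] with n hn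
    obtain ⟨m, rfl⟩ : ∃ m, n = m + 1 + k := ⟨n - 1 - k, by omega⟩
    refine lt_of_le_of_lt ?_ (hN m (by omega))
    exact div_le_div_of_nonneg_right (h m) (by positivity)
end

section
/- The preadapted switch distribution is strongly universal: for every stationary ergodic probability measure Q on Ω = {1,...,D}^ℤ, Q-almost surely limsup_{n→∞} (1/n)·(−log P(X_1^n)) ≤ h_Q. -/
open Filter MeasureTheory
open scoped Topology

/-- Preadapted Markov predictor with training data `y`: the natural-number index
corresponds to the Markov order shifted by one, so `BpredPre D y xs a (k+1) = B(a|xs,k)`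
and `BpredPre D y xs a 0 = 1/D`, where
`B(x_{n+1}|x_1^n, k) = (c(x_{n+1-k}^{n+1}|y_1^j x_1^n) + B(x_{n+1}|x_1^n, k-1)) /
(c(x_{n+1-k}^{n}|y_1^j x_1^{n-1}) + 1)`: counts are taken in the concatenated string,
and counts of substrings whose indices fall outside the available string are zero. -/
noncomputable def BpredPre (D : ℕ) (y xs : List (Fin D)) (a : Fin D) : ℕ → ℝ
  | 0 => 1 / D
  | k + 1 =>
    if k ≤ xs.length then
      ((cnt (xs.drop (xs.length - k) ++ [a]) (y ++ xs) : ℝ) + BpredPre D y xs a k) /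
      ((cntPred (xs.drop (xs.length - k)) (y ++ xs) : ℝ) + 1)
    else BpredPre D y xs a k

/-- Partial preadapted switch distribution `P(x_1^n, k)` with Markov order `k : ℤ`. -/
noncomputable def PpartPre (D : ℕ) (p : ℕ → ℝ) (y : List (Fin D)) (x : ℕ → Fin D) :
    ℕ → ℤ → ℝ
  | 0, _ => 0
  | 1, k =>
    if k = -1 then p 0 * BpredPre D y [] (x 0) 0
    else if k = 0 then (1 - p 0) * BpredPre D y [] (x 0) 1
    else 0
  | n + 2, k =>
    if -1 ≤ k ∧ k ≤ (n : ℤ) + 1 then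
      (p (n + 1) * PpartPre D p y x (n + 1) k +
        (1 - p (n + 1)) * PpartPre D p y x (n + 1) (k - 1)) *
        BpredPre D y (pref x (n + 1)) (x (n + 1)) (k + 1).toNat
    else 0

/-- The preadapted switch distribution `P(x_1^n) = Σ_{k=-1}^{n-1} P(x_1^n, k)`. -/
noncomputable def swPre (D : ℕ) (p : ℕ → ℝ) (y : List (Fin D)) (x : ℕ → Fin D) (n : ℕ) : ℝ :=
  ∑ kk ∈ Finset.range (n + 1), PpartPre D p y x n ((kk : ℤ) - 1)

noncomputable def Mx {α : Type*} (T : α → α) (g : α → ℝ) : ℕ → α → ℝ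
  | 0, _ => 0
  | n + 1, x => max 0 (g x + Mx T g n (T x))

section birk
variable {α : Type*} [MeasurableSpace α] {μ : Measure α} {T : α → α} {g : α → ℝ}

lemma Mx_nonneg (T : α → α) (g : α → ℝ) (n : ℕ) (x : α) : 0 ≤ Mx T g n x := by
  cases n <;> simp [Mx]

lemma Mx_mono (T : α → α) (g : α → ℝ) (x : α) : Monotone (fun n => Mx T g n x) := by
  apply monotone_nat_of_le_succ
  intro n
  induction n generalizing x with
  | zero => simp [Mx]
  | succ n ih =>
    simp only [Mx]
    exact max_le_max le_rfl (by have := ih (T x); simp only [Mx] at this ⊢; linarith)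

lemma birk_le_Mx (T : α → α) (g : α → ℝ) (n : ℕ) (x : α) : birkhoffSum T g n x ≤ Mx T g n x := by
  induction n generalizing x with
  | zero => simp [Mx]
  | succ n ih =>
    rw [birkhoffSum_succ']
    exact le_trans (by have := ih (T x); linarith) (le_max_right _ _)

lemma Mx_meas (hT : Measurable T) (hg : Measurable g) (n : ℕ) : Measurable (Mx T g n) := by
  induction n with
  | zero => exact measurable_const
  | succ n ih => exact measurable_const.max (hg.add (ih.comp hT))

lemma Mx_bound {C : ℝ} (hC : ∀ x, |g x| ≤ C) (n : ℕ) (x : α) : |Mx T g n x| ≤ n * C := by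
  have hC0 : 0 ≤ C := (abs_nonneg _).trans (hC x)
  rw [abs_of_nonneg (Mx_nonneg _ _ _ _)]
  induction n generalizing x with
  | zero => simp [Mx]
  | succ n ih =>
    have h1 := ih (T x)
    have h2 := (abs_le.1 (hC x)).2
    simp only [Mx]
    push_cast
    exact max_le (by positivity) (by linarith)

lemma int_of_bdd [IsProbabilityMeasure μ] {f : α → ℝ} (hf : Measurable f) {C : ℝ}
    (hC : ∀ x, |f x| ≤ C) : Integrable f μ :=
  Integrable.of_bound hf.aestronglyMeasurable C (ae_of_all _ hC)

lemma birk_neg [IsProbabilityMeasure μ] (hT : Ergodic T μ) (hg : Measurable g) {C : ℝ}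
    (hC : ∀ x, |g x| ≤ C) (hneg : ∫ x, g x ∂μ < 0) :
    ∀ᵐ x ∂μ, BddAbove (Set.range (fun n => Mx T g n x)) := by
  have hTm := hT.measurable
  have hmeas : MeasurableSet {x | BddAbove (Set.range (fun n => Mx T g n x))} :=
    measurableSet_bddAbove_range (fun n => Mx_meas hTm hg n)
  have hinv : T ⁻¹' {x | BddAbove (Set.range (fun n => Mx T g n x))} =
      {x | BddAbove (Set.range (fun n => Mx T g n x))} := by
    ext x
    simp only [Set.mem_preimage, Set.mem_ofPred_eq]
    constructor
    · rintro ⟨B, hB⟩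
      refine ⟨max 0 (g x + B), ?_⟩
      rintro _ ⟨n, rfl⟩
      have := hB ⟨n, rfl⟩
      refine (Mx_mono T g x (Nat.le_succ n)).trans ?_
      exact max_le_max le_rfl (by simp only at this ⊢; linarith)
    · rintro ⟨B, hB⟩
      refine ⟨B - g x, ?_⟩
      rintro _ ⟨n, rfl⟩
      have := hB ⟨n + 1, rfl⟩
      simp only [Mx] at this
      have := (le_max_right _ _).trans this
      simp only
      linarith
  rcases hT.toPreErgodic.ae_empty_or_univ hmeas hinv with h | h
  · exfalso
    have hA : ∀ᵐ x ∂μ, ¬ BddAbove (Set.range (fun n => Mx T g n x)) := by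
      filter_upwards [h] with x hx hb
      have : x ∈ (∅ : Set α) := by
        exact hx.mp hb
      exact this
    have hAT : ∀ᵐ x ∂μ, ¬ BddAbove (Set.range (fun n => Mx T g n (T x))) :=
      hT.toMeasurePreserving.quasiMeasurePreserving.ae hA
    have hlim : Tendsto (fun n => ∫ x, max (-(Mx T g n (T x))) (g x) ∂μ) atTop
        (𝓝 (∫ x, g x ∂μ)) := by
      apply tendsto_integral_of_dominated_convergence (fun _ => C)
      · intro n
        exact (((Mx_meas hTm hg n).comp hTm).neg.max hg).aestronglyMeasurable
      · exact integrable_const _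
      · intro n
        refine ae_of_all _ fun x => ?_
        have h1 := abs_le.1 (hC x)
        have h0 := Mx_nonneg T g n (T x)
        rw [Real.norm_eq_abs, abs_le]
        exact ⟨h1.1.trans (le_max_right _ _), max_le (by linarith [(abs_nonneg _).trans (hC x)]) h1.2⟩
      · filter_upwards [hAT] with x hx
        have ht : Tendsto (fun n => Mx T g n (T x)) atTop atTop :=
          tendsto_atTop_atTop_of_monotone' (Mx_mono T g (T x)) hx
        apply tendsto_const_nhds.congr'
        filter_upwards [ht.eventually_ge_atTop (-(g x))] with n hn
        rw [max_eq_right]; linarith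
    have hge : ∀ n, 0 ≤ ∫ x, max (-(Mx T g n (T x))) (g x) ∂μ := by
      intro n
      have e : ∀ x, max (-(Mx T g n (T x))) (g x) = Mx T g (n+1) x - Mx T g n (T x) := by
        intro x
        simp only [Mx]
        rw [max_sub_sub_right .. |>.symm]
        simp
      simp_rw [e]
      have i1 : Integrable (Mx T g (n+1)) μ := int_of_bdd (Mx_meas hTm hg _) (Mx_bound hC _)
      have i0 : Integrable (Mx T g n) μ := int_of_bdd (Mx_meas hTm hg _) (Mx_bound hC _)
      have i2 : Integrable (fun x => Mx T g n (T x)) μ :=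
        int_of_bdd ((Mx_meas hTm hg _).comp hTm) (fun x => Mx_bound hC n (T x))
      rw [integral_sub i1 i2]
      have : ∫ x, Mx T g n (T x) ∂μ = ∫ x, Mx T g n x ∂μ := by
        have hm := hT.toMeasurePreserving.map_eq
        conv_rhs => rw [← hm]
        rw [integral_map hTm.aemeasurable (Mx_meas hTm hg n).aestronglyMeasurable]
      rw [this, sub_nonneg]
      exact integral_mono i0 i1 (fun x => Mx_mono T g x (Nat.le_succ n))
    have := ge_of_tendsto' hlim hge
    linarith
  · filter_upwards [h] with x hx
    exact hx.mpr trivial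

lemma birk_upper [IsProbabilityMeasure μ] (hT : Ergodic T μ) (hg : Measurable g) {C : ℝ}
    (hC : ∀ x, |g x| ≤ C) {c : ℝ} (hc : ∫ x, g x ∂μ < c) :
    ∀ᵐ x ∂μ, ∀ᶠ n : ℕ in atTop, birkhoffSum T g n x / n < c := by
  obtain ⟨d, hd1, hd2⟩ := exists_between hc
  have ig : Integrable g μ := int_of_bdd hg hC
  have := birk_neg (g := fun x => g x - d) (C := C + |d|) hT (hg.sub measurable_const)
    (fun x => (abs_sub _ _).trans (by linarith [hC x]))
    (by rw [integral_sub ig (integrable_const _)]; simp; linarith)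
  filter_upwards [this] with x ⟨B, hB⟩
  have h2 : Tendsto (fun n : ℕ => B / n) atTop (𝓝 0) := tendsto_const_div_atTop_nhds_zero_nat B
  filter_upwards [h2.eventually_lt_const (sub_pos.2 hd2), eventually_gt_atTop 0] with n hn hn0
  have h3 := (birk_le_Mx T (fun x => g x - d) n x).trans (hB ⟨n, rfl⟩)
  have h4 : birkhoffSum T (fun x => g x - d) n x = birkhoffSum T g n x - n * d := by
    simp [birkhoffSum, Finset.sum_sub_distrib]
  rw [h4] at h3
  have hn' : (0:ℝ) < n := by exact_mod_cast hn0
  rw [div_lt_iff₀ hn'] at hn ⊢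
  nlinarith

theorem birkhoff_ae [IsProbabilityMeasure μ] (hT : Ergodic T μ) (hg : Measurable g) {C : ℝ}
    (hC : ∀ x, |g x| ≤ C) :
    ∀ᵐ x ∂μ, Tendsto (fun n : ℕ => birkhoffSum T g n x / n) atTop (𝓝 (∫ x, g x ∂μ)) := by
  have h1 : ∀ᵐ x ∂μ, ∀ m : ℕ, ∀ᶠ n : ℕ in atTop,
      birkhoffSum T g n x / n < ∫ x, g x ∂μ + 1 / ((m:ℝ) + 1) := by
    rw [ae_all_iff]; intro m
    exact birk_upper hT hg hC (by linarith [Nat.one_div_pos_of_nat (α := ℝ) (n := m)])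
  have h2 : ∀ᵐ x ∂μ, ∀ m : ℕ, ∀ᶠ n : ℕ in atTop,
      birkhoffSum T (fun x => -g x) n x / n < -∫ x, g x ∂μ + 1 / ((m:ℝ) + 1) := by
    rw [ae_all_iff]; intro m
    exact birk_upper hT hg.neg (C := C) (by simpa using hC)
      (by rw [integral_neg']; linarith [Nat.one_div_pos_of_nat (α := ℝ) (n := m)])
  filter_upwards [h1, h2] with x hx1 hx2
  rw [Metric.tendsto_atTop']
  intro ε hε
  obtain ⟨m, hm⟩ := exists_nat_one_div_lt hε
  obtain ⟨N, hN⟩ := eventually_atTop.1 ((hx1 m).and (hx2 m))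
  refine ⟨N, fun n hn => ?_⟩
  obtain ⟨a, b⟩ := hN n hn.le
  have e : birkhoffSum T (fun x => -g x) n x = - birkhoffSum T g n x := by
    simp [birkhoffSum]
  rw [e, neg_div] at b
  rw [Real.dist_eq, abs_lt]
  constructor <;> linarith
end birk

section comb
variable {D : ℕ}

lemma pref_len (x : ℕ → Fin D) (n : ℕ) : (pref x n).length = n := by simp [pref]

lemma pref_get (x : ℕ → Fin D) (n i : ℕ) (h : i < (pref x n).length) : (pref x n)[i] = x i := by
  simp [pref]

lemma pref_win (x : ℕ → Fin D) {n i k : ℕ} (h : i + k ≤ n) :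
    ((pref x n).drop i).take k = pref (fun j => x (i + j)) k := by
  apply List.ext_getElem
  · simp [pref]; omega
  · intro j h1 h2
    simp [pref]

lemma pref_drop (x : ℕ → Fin D) {n k : ℕ} (h : k ≤ n) :
    (pref x n).drop (n - k) = pref (fun j => x (n - k + j)) k := by
  apply List.ext_getElem
  · simp [pref]; omega
  · intro j h1 h2
    simp [pref]

lemma pref_succ (x : ℕ → Fin D) (k : ℕ) : pref x (k + 1) = pref x k ++ [x k] := by
  simp [pref, List.range_succ]

/-- number of occurrences along a path -/
def Nw (w : List (Fin D)) (n : ℕ) (x : ℕ → Fin D) : ℕ :=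
  ((Finset.range n).filter (fun i => pref (fun j => x (i + j)) w.length = w)).card

lemma cnt_eq (w z : List (Fin D)) : cnt w z =
    ((Finset.range (z.length - w.length + 1)).filter
      (fun i => (z.drop i).take w.length = w)).card := by
  rfl

lemma cnt_lower (y w : List (Fin D)) (x : ℕ → Fin D) {n : ℕ} (h : w.length ≤ n) :
    Nw w (n + 1 - w.length) x ≤ cnt w (y ++ pref x n) := by
  rw [cnt_eq, Nw]
  apply Finset.card_le_card_of_injOn (fun i => y.length + i)
  · intro i hi
    simp only [Finset.coe_filter, Finset.mem_range, Set.mem_ofPred_eq] at hi ⊢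
    refine ⟨by simp [pref_len]; omega, ?_⟩
    rw [List.drop_append, List.drop_eq_nil_of_le (by omega), List.nil_append,
      Nat.add_sub_cancel_left, pref_win x (by omega)]
    exact hi.2
  · intro i _ j _ hij
    simpa using hij

lemma match_prefix {w z z' : List (Fin D)} (hz : z <+: z') {i : ℕ}
    (h : (z.drop i).take w.length = w) : (z'.drop i).take w.length = w := by
  obtain ⟨t, rfl⟩ := hz
  have hl : w.length ≤ z.length - i := by
    have := congrArg List.length h
    simp at this
    omega
  rcases Nat.eq_zero_or_pos w.length with h0 | h0
  · rw [List.length_eq_zero_iff.1 h0]; simp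
  · rw [List.drop_append, List.take_append_of_le_length (by simpa using hl)]
    exact h

lemma cntPred_upper (y w : List (Fin D)) (x : ℕ → Fin D) (n : ℕ) :
    cntPred w (y ++ pref x n) ≤ y.length + Nw w (n + 1) x := by
  unfold cntPred
  split_ifs
  · simp
  rw [cnt_eq, Nw]
  have hsub : ((Finset.range ((y ++ pref x n).dropLast.length - w.length + 1)).filter
      (fun i => ((y ++ pref x n).dropLast.drop i).take w.length = w)) ⊆
      Finset.range y.length ∪ ((Finset.range (n + 1)).filter
        (fun i => pref (fun j => x (i + j)) w.length = w)).image (fun i => y.length + i) := by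
    intro i hi
    simp only [Finset.mem_filter, Finset.mem_range, Finset.mem_union, Finset.mem_image] at hi ⊢
    by_cases hiy : i < y.length
    · exact Or.inl hiy
    · right
      obtain ⟨h1, h2⟩ := hi
      have h3 := match_prefix (List.dropLast_prefix _) h2
      simp [pref_len] at h1
      refine ⟨i - y.length, ⟨by omega, ?_⟩, by omega⟩
      rw [List.drop_append, List.drop_eq_nil_of_le (by omega), List.nil_append] at h3
      have hl : w.length ≤ n - (i - y.length) := by
        have := congrArg List.length h3
        simp [pref_len] at this
        omega
      rw [pref_win x (by omega)] at h3
      exact h3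
  refine (Finset.card_le_card hsub).trans ((Finset.card_union_le _ _).trans ?_)
  rw [Finset.card_range]
  exact Nat.add_le_add_left Finset.card_image_le _

lemma B_pos (hD : 2 ≤ D) (y xs : List (Fin D)) (a : Fin D) (k : ℕ) : 0 < BpredPre D y xs a k := by
  induction k with
  | zero =>
    have : (0:ℝ) < D := by exact_mod_cast (by omega : 0 < D)
    simp only [BpredPre]; positivity
  | succ k ih =>
    simp only [BpredPre]
    split_ifs
    · positivity
    · exact ih

lemma B_lower (hD : 2 ≤ D) (y : List (Fin D)) (x : ℕ → Fin D) {n k : ℕ} (h : k + 1 ≤ n) :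
    (Nw (pref (fun j => x (n - k + j)) (k + 1)) (n - k) x : ℝ) /
      (Nw (pref (fun j => x (n - k + j)) k) (n + 1) x + (y.length + 1)) ≤
    BpredPre D y (pref x n) (x n) (k + 1) := by
  simp only [BpredPre, pref_len]
  rw [if_pos (by omega), pref_drop x (by omega)]
  have e : pref (fun j => x (n - k + j)) k ++ [x n] = pref (fun j => x (n - k + j)) (k + 1) := by
    rw [pref_succ]; congr 3; omega
  rw [e]
  have h1 := cnt_lower y (pref (fun j => x (n - k + j)) (k + 1)) x (n := n) (by rw [pref_len]; omega)
  rw [pref_len, Nat.add_sub_add_right] at h1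
  have h2 := cntPred_upper y (pref (fun j => x (n - k + j)) k) x n
  have h1' : (Nw (pref (fun j => x (n - k + j)) (k + 1)) (n - k) x : ℝ) ≤
    cnt (pref (fun j => x (n - k + j)) (k + 1)) (y ++ pref x n) := by exact_mod_cast h1
  have h2' : (cntPred (pref (fun j => x (n - k + j)) k) (y ++ pref x n) : ℝ) ≤
    y.length + Nw (pref (fun j => x (n - k + j)) k) (n + 1) x := by exact_mod_cast h2
  have h3 := B_pos hD y (pref x n) (x n) k
  apply div_le_div₀ <;> first | positivity | linarith

lemma P_nonneg (hD : 2 ≤ D) (p : ℕ → ℝ) (hp : ∀ n, p n ∈ Set.Ioo (0 : ℝ) 1)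
    (y : List (Fin D)) (x : ℕ → Fin D) (n : ℕ) (k : ℤ) : 0 ≤ PpartPre D p y x n k := by
  induction n generalizing k with
  | zero => simp [PpartPre]
  | succ n ih =>
    cases n with
    | zero =>
      have := hp 0
      simp only [PpartPre]
      split_ifs
      · exact mul_nonneg this.1.le (B_pos hD _ _ _ _).le
      · exact mul_nonneg (by linarith [this.2]) (B_pos hD _ _ _ _).le
      · exact le_rfl
    | succ n =>
      have := hp (n + 1)
      simp only [PpartPre]
      split_ifs
      · exact mul_nonneg (add_nonneg (mul_nonneg this.1.le (ih _))
          (mul_nonneg (by linarith [this.2]) (ih _))) (B_pos hD _ _ _ _).le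
      · exact le_rfl

lemma P_step (hD : 2 ≤ D) (p : ℕ → ℝ) (hp : ∀ n, p n ∈ Set.Ioo (0 : ℝ) 1)
    (y : List (Fin D)) (x : ℕ → Fin D) {n k : ℕ} (h : k + 1 ≤ n) :
    p n * PpartPre D p y x n k * BpredPre D y (pref x n) (x n) (k + 1) ≤
      PpartPre D p y x (n + 1) k := by
  obtain ⟨m, rfl⟩ : ∃ m, n = m + 1 := ⟨n - 1, by omega⟩
  have := hp (m + 1)
  rw [PpartPre, if_pos (by omega)]
  have e : ((k : ℤ) + 1).toNat = k + 1 := by omega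
  rw [e]
  apply mul_le_mul_of_nonneg_right _ (B_pos hD _ _ _ _).le
  have := mul_nonneg (by linarith [this.2] : 0 ≤ 1 - p (m+1))
    (P_nonneg hD p hp y x (m+1) ((k:ℤ) - 1))
  linarith

lemma P_base (hD : 2 ≤ D) (p : ℕ → ℝ) (hp : ∀ n, p n ∈ Set.Ioo (0 : ℝ) 1)
    (y : List (Fin D)) (x : ℕ → Fin D) (k : ℕ) : 0 < PpartPre D p y x (k + 1) k := by
  induction k with
  | zero =>
    have := hp 0
    simp only [PpartPre]
    simp only [Nat.cast_zero, zero_add]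
    rw [if_neg (by omega)]
    exact mul_pos (by linarith [this.2]) (B_pos hD _ _ _ _)
  | succ k ih =>
    have := hp (k + 1)
    rw [PpartPre, if_pos (by push_cast; omega)]
    apply mul_pos _ (B_pos hD _ _ _ _)
    have e : ((k + 1 : ℕ) : ℤ) - 1 = k := by push_cast; ring
    rw [e]
    have h1 := mul_pos (by linarith [this.2] : 0 < 1 - p (k+1)) ih
    have h2 := mul_nonneg this.1.le (P_nonneg hD p hp y x (k+1) ((k+1 : ℕ):ℤ))
    linarith

lemma P_pos (hD : 2 ≤ D) (p : ℕ → ℝ) (hp : ∀ n, p n ∈ Set.Ioo (0 : ℝ) 1)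
    (y : List (Fin D)) (x : ℕ → Fin D) {n k : ℕ} (h : k + 1 ≤ n) : 0 < PpartPre D p y x n k := by
  induction n, h using Nat.le_induction with
  | base => exact P_base hD p hp y x k
  | succ n hn ih =>
    exact lt_of_lt_of_le (mul_pos (mul_pos (hp n).1 ih) (B_pos hD _ _ _ _)) (P_step hD p hp y x hn)

lemma sw_ge (hD : 2 ≤ D) (p : ℕ → ℝ) (hp : ∀ n, p n ∈ Set.Ioo (0 : ℝ) 1)
    (y : List (Fin D)) (x : ℕ → Fin D) {n k : ℕ} (h : k + 1 ≤ n) :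
    PpartPre D p y x n k ≤ swPre D p y x n := by
  unfold swPre
  have := Finset.single_le_sum (f := fun kk : ℕ => PpartPre D p y x n ((kk : ℤ) - 1))
    (s := Finset.range (n + 1)) (fun i _ => P_nonneg hD p hp y x n _)
    (Finset.mem_range.2 (by omega : k + 1 < n + 1))
  simpa using this

lemma log_p_tendsto (p : ℕ → ℝ)
    (hprod : ∃ L, 0 < L ∧ Tendsto (fun N : ℕ => ∏ i ∈ Finset.range N, p i) atTop (𝓝 L))
    (hp : ∀ n, p n ∈ Set.Ioo (0 : ℝ) 1) :
    Tendsto (fun n => Real.log (p n)) atTop (𝓝 0) := by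
  obtain ⟨L, hL, ht⟩ := hprod
  have h1 := ((ht.comp (tendsto_add_atTop_nat 1)).div ht hL.ne')
  rw [div_self hL.ne'] at h1
  have h2 : Tendsto p atTop (𝓝 1) := by
    apply h1.congr
    intro n
    have : ∏ i ∈ Finset.range n, p i ≠ 0 := Finset.prod_ne_zero_iff.2 fun i _ => (hp i).1.ne'
    simp only [Function.comp, Pi.div_apply, Finset.prod_range_succ]
    field_simp
  simpa using h2.log one_ne_zero

lemma tendsto_reindex {u : ℕ → ℝ} {h : ℝ} (hu : Tendsto (fun m : ℕ => u m / m) atTop (𝓝 h))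
    {φ : ℕ → ℕ} (h1 : Tendsto φ atTop atTop)
    (h2 : Tendsto (fun n => (φ n : ℝ) / n) atTop (𝓝 1)) :
    Tendsto (fun n : ℕ => u (φ n) / n) atTop (𝓝 h) := by
  have := (hu.comp h1).mul h2
  rw [mul_one] at this
  apply this.congr'
  filter_upwards [h1.eventually_gt_atTop 0] with n hn
  have : (φ n : ℝ) ≠ 0 := by exact_mod_cast hn.ne'
  simp only [Function.comp]
  field_simp

lemma tendsto_reindex_sub {u : ℕ → ℝ} {h : ℝ} (hu : Tendsto (fun m : ℕ => u m / m) atTop (𝓝 h))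
    (k : ℕ) : Tendsto (fun n : ℕ => u (n - k) / n) atTop (𝓝 h) := by
  apply tendsto_reindex hu (tendsto_sub_atTop_nat k)
  have h2 : Tendsto (fun n : ℕ => 1 - (k : ℝ) / n) atTop (𝓝 (1 - 0)) :=
    tendsto_const_nhds.sub (tendsto_const_div_atTop_nhds_zero_nat _)
  rw [sub_zero] at h2
  apply h2.congr'
  filter_upwards [eventually_gt_atTop 0, eventually_ge_atTop k] with n hn hk
  have : (n : ℝ) ≠ 0 := by exact_mod_cast hn.ne'
  rw [Nat.cast_sub hk]
  field_simp

lemma tendsto_reindex_succ {u : ℕ → ℝ} {h : ℝ}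
    (hu : Tendsto (fun m : ℕ => u m / m) atTop (𝓝 h)) :
    Tendsto (fun n : ℕ => u (n + 1) / n) atTop (𝓝 h) := by
  apply tendsto_reindex hu (tendsto_add_atTop_nat 1)
  have h2 : Tendsto (fun n : ℕ => 1 + (1 : ℝ) / n) atTop (𝓝 (1 + 0)) :=
    tendsto_const_nhds.add (tendsto_const_div_atTop_nhds_zero_nat _)
  rw [add_zero] at h2
  apply h2.congr'
  filter_upwards [eventually_gt_atTop 0] with n hn
  have : (n : ℝ) ≠ 0 := by exact_mod_cast hn.ne'
  push_cast
  field_simp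

lemma det_bound (hD : 2 ≤ D) (p : ℕ → ℝ) (hp : ∀ n, p n ∈ Set.Ioo (0 : ℝ) 1)
    (hlp : Tendsto (fun n => Real.log (p n)) atTop (𝓝 0))
    (y : List (Fin D)) (x : ℕ → Fin D) (k : ℕ) (f : ℕ → ℝ) (h : ℝ)
    (hS : Tendsto (fun m : ℕ => (∑ i ∈ Finset.range m, f i) / m) atTop (𝓝 h))
    (hB : ∀ δ > 0, ∀ᶠ n in atTop,
      -f (n - k) - δ ≤ Real.log (BpredPre D y (pref x n) (x n) (k + 1)))
    (ε : ℝ) (hε : 0 < ε) :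
    ∀ᶠ n : ℕ in atTop, -Real.log (swPre D p y x n) / n ≤ h + ε := by
  set δ := ε / 4 with hδ
  have hδ0 : 0 < δ := by positivity
  obtain ⟨N₀, hN₀⟩ := eventually_atTop.1 ((hB δ hδ0).and
    (hlp.eventually_const_le (by linarith : -δ < 0)))
  set N := max N₀ (k + 1)
  set S : ℕ → ℝ := fun m => ∑ i ∈ Finset.range m, f i
  set a : ℕ → ℝ := fun n => Real.log (PpartPre D p y x n k)
  have key : ∀ n ≥ N, a N - 2 * δ * (n - N) - (S (n - k) - S (N - k)) ≤ a n := by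
    intro n hn
    induction n, hn using Nat.le_induction with
    | base => simp
    | succ n hn ih =>
      have hk : k + 1 ≤ n := (le_max_right _ _).trans hn
      obtain ⟨b1, b2⟩ := hN₀ n ((le_max_left _ _).trans hn)
      have hst := P_step hD p hp y x hk
      have hPp := P_pos hD p hp y x hk
      have hBp := B_pos hD y (pref x n) (x n) (k + 1)
      have hl := Real.log_le_log (mul_pos (mul_pos (hp n).1 hPp) hBp) hst
      rw [Real.log_mul (mul_pos (hp n).1 hPp).ne' hBp.ne', Real.log_mul (hp n).1.ne' hPp.ne'] at hl
      have hSs : S (n + 1 - k) = S (n - k) + f (n - k) := by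
        simp only [S]
        rw [Nat.sub_add_comm (by omega), Finset.sum_range_succ]
      rw [hSs]
      push_cast
      simp only [a] at *
      linarith
  have hlim : Tendsto (fun n : ℕ => (-a N - 2 * δ * N - S (N - k)) / n + 2 * δ + S (n - k) / n)
      atTop (𝓝 (0 + 2 * δ + h)) :=
    ((tendsto_const_div_atTop_nhds_zero_nat _).add tendsto_const_nhds).add
      (tendsto_reindex_sub hS k)
  filter_upwards [hlim.eventually_lt_const (by linarith : 0 + 2 * δ + h < h + ε),
    eventually_ge_atTop N] with n hn1 hn2
  have hk : k + 1 ≤ n := (le_max_right _ _).trans hn2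
  have hn0 : (0 : ℝ) < n := by exact_mod_cast (by omega : 0 < n)
  have h1 := key n hn2
  have h2 : a n ≤ Real.log (swPre D p y x n) :=
    Real.log_le_log (P_pos hD p hp y x hk) (sw_ge hD p hp y x hk)
  refine le_trans ?_ hn1.le
  have e : (-a N - 2 * δ * N - S (N - k)) / n + 2 * δ + S (n - k) / n =
      (-a N + 2 * δ * (n - N) + (S (n - k) - S (N - k))) / n := by
    field_simp
    ring
  rw [e]
  apply div_le_div_of_nonneg_right _ hn0.le
  linarith

end comb

section erg
variable {D : ℕ}

/-- cylinder of a word -/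
def Ew (w : List (Fin D)) : Set (Omega D) := {ω | pref (path D ω) w.length = w}

/-- probability of a word -/
noncomputable def qw (Q : Measure (Omega D)) (w : List (Fin D)) : ℝ := (Q (Ew w)).toReal

lemma pref_eq_iff_s14 (x x' : ℕ → Fin D) (n : ℕ) : pref x n = pref x' n ↔ ∀ i < n, x i = x' i := by
  simp [pref, List.map_inj_left]

lemma Qstr_eq (Q : Measure (Omega D)) (x : ℕ → Fin D) (n : ℕ) : Qstr D Q x n = qw Q (pref x n) := by
  unfold Qstr qw
  congr 2
  ext ω
  simp only [cylSet, Ew, Set.mem_ofPred_eq, pref_len, pref_eq_iff_s14, path]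

lemma iter_shift (ω : Omega D) (i : ℕ) (j : ℤ) : (shiftT D)^[i] ω j = ω (j + i) := by
  induction i generalizing ω with
  | zero => simp
  | succ i ih =>
    rw [Function.iterate_succ_apply, ih]
    simp only [shiftT]
    congr 1
    push_cast
    ring

lemma path_iter (ω : Omega D) (i : ℕ) :
    path D ((shiftT D)^[i] ω) = fun j => path D ω (i + j) := by
  funext j
  simp only [path, iter_shift]
  congr 1
  push_cast
  ring

lemma meas_pref (φ : List (Fin D) → ℝ) (k : ℕ) :
    Measurable (fun ω : Omega D => φ (pref (path D ω) k)) ∧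
      ∃ C, ∀ ω : Omega D, |φ (pref (path D ω) k)| ≤ C := by
  have e : ∀ ω : Omega D, pref (path D ω) k = List.ofFn (fun i : Fin k => ω ((i : ℤ) + 1)) := by
    intro ω
    apply List.ext_getElem
    · simp [pref]
    · intro i h1 h2
      simp [pref, path]
  constructor
  · simp_rw [e]
    have h1 : Measurable (fun v : Fin k → Fin D => φ (List.ofFn v)) := measurable_of_finite _
    have h2 : Measurable (fun ω : Omega D => fun i : Fin k => ω ((i : ℤ) + 1)) := by
      fun_prop
    exact h1.comp h2
  · obtain ⟨C, hC⟩ := (Set.finite_range (fun v : Fin k → Fin D => |φ (List.ofFn v)|)).bddAbove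
    refine ⟨C, fun ω => ?_⟩
    rw [e]
    exact hC ⟨_, rfl⟩

lemma Ew_meas (w : List (Fin D)) : MeasurableSet (Ew w) := by
  classical
  have := (meas_pref (fun v : List (Fin D) => if v = w then (1:ℝ) else 0) w.length).1
    (measurableSet_singleton (1:ℝ))
  convert this using 1
  ext ω
  simp [Ew]

lemma freq_ae (Q : Measure (Omega D)) [IsProbabilityMeasure Q] (hQ : Ergodic (shiftT D) Q) :
    ∀ᵐ ω ∂Q, ∀ w : List (Fin D),
      Tendsto (fun n : ℕ => (Nw w n (path D ω) : ℝ) / n) atTop (𝓝 (qw Q w)) := by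
  rw [ae_all_iff]
  intro w
  have h := birkhoff_ae (g := (Ew w).indicator 1) hQ (measurable_one.indicator (Ew_meas w)) (C := 1)
    (fun x => by by_cases hx : x ∈ Ew w <;> simp [hx])
  rw [integral_indicator_one (Ew_meas w)] at h
  filter_upwards [h] with ω hω
  change Tendsto _ atTop (𝓝 (Q.real (Ew w)))
  convert hω using 3 with n
  rw [Nw, birkhoffSum, Finset.card_filter]
  push_cast
  apply Finset.sum_congr rfl
  intro i _
  by_cases hi : (shiftT D)^[i] ω ∈ Ew w
  · rw [Set.indicator_of_mem hi, if_pos]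
    · rfl
    · rw [Ew, Set.mem_ofPred_eq, path_iter] at hi
      exact hi
  · rw [Set.indicator_of_notMem hi, if_neg]
    rw [Ew, Set.mem_ofPred_eq, path_iter] at hi
    exact hi

lemma pos_ae (Q : Measure (Omega D)) [IsProbabilityMeasure Q] (hQ : Ergodic (shiftT D) Q) :
    ∀ᵐ ω ∂Q, ∀ i k : ℕ, 0 < qw Q (pref (fun j => path D ω (i + j)) k) := by
  have h0 : ∀ᵐ ω ∂Q, ∀ w : List (Fin D), qw Q w = 0 → ω ∉ Ew w := by
    rw [ae_all_iff]
    intro w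
    by_cases hw : qw Q w = 0
    · have : Q (Ew w) = 0 := by
        rcases (ENNReal.toReal_eq_zero_iff _).1 hw with h | h
        · exact h
        · exact absurd h (measure_ne_top _ _)
      filter_upwards [measure_eq_zero_iff_ae_notMem.1 this] with ω h1 _
      exact h1
    · exact ae_of_all _ fun ω h => absurd h hw
  have h1 : ∀ᵐ ω ∂Q, ∀ i : ℕ, ∀ w : List (Fin D), qw Q w = 0 → (shiftT D)^[i] ω ∉ Ew w := by
    rw [ae_all_iff]
    intro i
    exact (hQ.toMeasurePreserving.iterate i).quasiMeasurePreserving.ae h0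
  filter_upwards [h1] with ω hω i k
  rcases (ENNReal.toReal_nonneg : 0 ≤ qw Q (pref (fun j => path D ω (i + j)) k)).lt_or_eq with h | h
  · exact h
  · exfalso
    apply hω i _ h.symm
    rw [Ew, Set.mem_ofPred_eq, path_iter, pref_len]

/-- conditional information -/
noncomputable def finfo (Q : Measure (Omega D)) (k : ℕ) (ω : Omega D) : ℝ :=
  -Real.log (qw Q (pref (path D ω) (k + 1))) - -Real.log (qw Q (pref (path D ω) k))

lemma finfo_int (Q : Measure (Omega D)) [IsProbabilityMeasure Q] (k : ℕ) :
    ∫ ω, finfo Q k ω ∂Q = (∫ ω, -Real.log (Qstr D Q (path D ω) (k + 1)) ∂Q) -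
      ∫ ω, -Real.log (Qstr D Q (path D ω) k) ∂Q := by
  simp_rw [Qstr_eq, finfo]
  have h1 := meas_pref (fun w : List (Fin D) => -Real.log (qw Q w)) (k + 1)
  have h2 := meas_pref (fun w : List (Fin D) => -Real.log (qw Q w)) k
  obtain ⟨h1, C1, hC1⟩ := h1
  obtain ⟨h2, C2, hC2⟩ := h2
  exact integral_sub (int_of_bdd h1 hC1) (int_of_bdd h2 hC2)

lemma finfo_ae (Q : Measure (Omega D)) [IsProbabilityMeasure Q] (hQ : Ergodic (shiftT D) Q) (k : ℕ) :
    ∀ᵐ ω ∂Q, Tendsto (fun m : ℕ => (∑ i ∈ Finset.range m, finfo Q k ((shiftT D)^[i] ω)) / m) atTop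
      (𝓝 (∫ ω, finfo Q k ω ∂Q)) := by
  obtain ⟨h1, C1, hC1⟩ := meas_pref (fun w : List (Fin D) => -Real.log (qw Q w)) (k + 1)
  obtain ⟨h2, C2, hC2⟩ := meas_pref (fun w : List (Fin D) => -Real.log (qw Q w)) k
  exact birkhoff_ae (C := C1 + C2) hQ (h1.sub h2)
    (fun ω => (abs_sub _ _).trans (add_le_add (hC1 ω) (hC2 ω)))

lemma order_k_ae (hD : 2 ≤ D) (y : List (Fin D))
    (p : ℕ → ℝ) (hp : ∀ n, p n ∈ Set.Ioo (0 : ℝ) 1)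
    (hlp : Tendsto (fun n => Real.log (p n)) atTop (𝓝 0))
    (Q : Measure (Omega D)) [IsProbabilityMeasure Q] (hQ : Ergodic (shiftT D) Q) (k : ℕ) :
    ∀ᵐ ω ∂Q, ∀ ε > 0, ∀ᶠ n : ℕ in atTop,
      -Real.log (swPre D p y (path D ω) n) / n ≤ (∫ ω, finfo Q k ω ∂Q) + ε := by
  filter_upwards [finfo_ae Q hQ k, freq_ae Q hQ, pos_ae Q hQ] with ω h1 h2 h3 ε hε
  set x := path D ω
  refine det_bound hD p hp hlp y x k (fun i => finfo Q k ((shiftT D)^[i] ω)) _ h1 ?_ ε hε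
  intro δ hδ
  have hw : ∀ w ∈ {w : List (Fin D) | w.length = k + 1}, ∀ᶠ n : ℕ in atTop,
      0 < qw Q w → 0 < qw Q (w.take k) → 0 < (Nw w (n - k) x : ℝ) ∧
      Real.log (qw Q w) - Real.log (qw Q (w.take k)) - δ ≤
        Real.log ((Nw w (n - k) x : ℝ) / (Nw (w.take k) (n + 1) x + (y.length + 1))) := by
    intro w _
    by_cases hq : 0 < qw Q w
    swap
    · exact Eventually.of_forall fun n h => absurd h hq
    by_cases hq' : 0 < qw Q (w.take k)
    swap
    · exact Eventually.of_forall fun n _ h => absurd h hq'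
    have t1 : Tendsto (fun n : ℕ => (Nw w (n - k) x : ℝ) / n) atTop (𝓝 (qw Q w)) :=
      tendsto_reindex_sub (u := fun n => (Nw w n x : ℝ)) (h2 w) k
    have t2 : Tendsto (fun n : ℕ => ((Nw (w.take k) (n + 1) x : ℝ)) / n + (y.length + 1 : ℝ) / n)
        atTop (𝓝 (qw Q (w.take k) + 0)) :=
      (tendsto_reindex_succ (u := fun n => (Nw (w.take k) n x : ℝ)) (h2 (w.take k))).add
        (tendsto_const_div_atTop_nhds_zero_nat _)
    rw [add_zero] at t2
    have t3 := (t1.div t2 hq'.ne').log (div_pos hq hq').ne'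
    rw [Real.log_div hq.ne' hq'.ne'] at t3
    filter_upwards [t3.eventually_const_lt (sub_lt_self _ hδ), t1.eventually_const_lt hq,
      eventually_gt_atTop 0] with n a1 a2 a3 _ _
    have hn : (0 : ℝ) < n := by exact_mod_cast a3
    constructor
    · have := mul_pos a2 hn
      rwa [div_mul_cancel₀ _ hn.ne'] at this
    · rw [Pi.div_apply, ← add_div, div_div_div_cancel_right₀ hn.ne'] at a1
      exact a1.le
  have hfin : {w : List (Fin D) | w.length = k + 1}.Finite := List.finite_length_eq _ _
  filter_upwards [(hfin.eventually_all).2 hw, eventually_ge_atTop (k + 1)] with n hn hk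
  have htake : (pref (fun j => x (n - k + j)) (k + 1)).take k = pref (fun j => x (n - k + j)) k := by
    rw [pref_succ, List.take_append_of_le_length (by rw [pref_len]), List.take_of_length_le
      (by rw [pref_len])]
  have hh := hn (pref (fun j => x (n - k + j)) (k + 1)) (pref_len _ _)
  rw [htake] at hh
  obtain ⟨b1, b2⟩ := hh (h3 _ _) (h3 _ _)
  have hBl := B_lower hD y x hk
  have := Real.log_le_log (div_pos b1 (by positivity)) hBl
  refine le_trans ?_ (b2.trans this)
  simp only [finfo, path_iter]
  apply le_of_eq
  simp only [x]
  ring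

lemma entropy_exists (H : ℕ → ℝ) (h : ℝ) (hH : Tendsto (fun n : ℕ => H n / n) atTop (𝓝 h))
    (ε : ℝ) (hε : 0 < ε) : ∃ k, H (k + 1) - H k ≤ h + ε := by
  by_contra! hc
  have h1 : ∀ n : ℕ, H 0 + n * (h + ε) ≤ H n := by
    intro n
    induction n with
    | zero => simp
    | succ n ih => push_cast; linarith [hc n]
  have h2 : Tendsto (fun n : ℕ => H 0 / n + (h + ε)) atTop (𝓝 (0 + (h + ε))) :=
    (tendsto_const_div_atTop_nhds_zero_nat _).add tendsto_const_nhds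
  have := le_of_tendsto_of_tendsto h2 hH (by
    filter_upwards [eventually_gt_atTop 0] with n hn
    have hn' : (0 : ℝ) < n := by exact_mod_cast hn
    rw [le_div_iff₀ hn', add_mul, div_mul_cancel₀ _ hn'.ne']
    linarith [h1 n])
  linarith

end erg

/-- The preadapted switch distribution is strongly universal: for every stationary
ergodic probability measure `Q` on `Ω = {1,...,D}^ℤ`, `Q`-almost surely
`limsup_{n→∞} (1/n)·(−log P(X_1^n)) ≤ h_Q`, where `h_Q` is the entropy rate of `Q`. -/
theorem preadapted_switch_strongly_universal
    (D : ℕ) (hD : 2 ≤ D) (y : List (Fin D))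
    (p : ℕ → ℝ) (hp : ∀ n, p n ∈ Set.Ioo (0 : ℝ) 1)
    (hprod : ∃ L, 0 < L ∧ Tendsto (fun N : ℕ => ∏ i ∈ Finset.range N, p i) atTop (𝓝 L))
    (Q : Measure (Omega D)) [IsProbabilityMeasure Q]
    (hQerg : Ergodic (shiftT D) Q)
    (hQ : ℝ)
    (hent : Tendsto
      (fun n : ℕ => (∫ ω, -Real.log (Qstr D Q (path D ω) n) ∂Q) / n) atTop (𝓝 hQ)) :
    ∀ᵐ ω ∂Q,
      Filter.limsup (fun n : ℕ => -Real.log (swPre D p y (path D ω) n) / n) atTop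
        ≤ hQ := by
  have hlp := log_p_tendsto p hprod hp
  have hall : ∀ᵐ ω ∂Q, ∀ k : ℕ, ∀ ε > 0, ∀ᶠ n : ℕ in atTop,
      -Real.log (swPre D p y (path D ω) n) / n ≤ (∫ ω, finfo Q k ω ∂Q) + ε := by
    rw [ae_all_iff]
    exact fun k => order_k_ae hD y p hp hlp Q hQerg k
  have hQ0 : 0 ≤ hQ := by
    refine ge_of_tendsto' hent fun n => div_nonneg (integral_nonneg fun ω => ?_) (Nat.cast_nonneg n)
    have h1 : Qstr D Q (path D ω) n ≤ 1 := ENNReal.toReal_le_of_le_ofReal zero_le_one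
      (by simpa using prob_le_one)
    have := Real.log_nonpos ENNReal.toReal_nonneg h1
    exact neg_nonneg.2 this
  filter_upwards [hall] with ω hω
  have hmem : ∀ ε > 0, ∀ᶠ n : ℕ in atTop,
      -Real.log (swPre D p y (path D ω) n) / n ≤ hQ + ε := by
    intro ε hε
    obtain ⟨k, hk⟩ := entropy_exists _ hQ hent (ε / 2) (by positivity)
    filter_upwards [hω k (ε / 2) (by positivity)] with n hn
    rw [finfo_int] at hn
    linarith
  rw [Filter.limsup_eq]
  by_cases hb : BddBelow {a : ℝ | ∀ᶠ n : ℕ in atTop,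
      -Real.log (swPre D p y (path D ω) n) / n ≤ a}
  · exact le_of_forall_pos_le_add fun ε hε => csInf_le hb (hmem ε hε)
  · rw [Real.sInf_of_not_bddBelow hb]
    exact hQ0
end
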